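/- arXiv:2005.11879 — 3 statements merged into one kernel-verified Lean document; each statement's English description precedes it below -/
import Mathlib

section
/- Let X ∈ ℝ^{d×n} be deterministic and (ε,B)-orthonormal with ε < 1/λ_σ, let W ∈ ℝ^{ď×d} have i.i.d. N(0,1) entries, and let X̌ = σ(WX)/√ď have columns x̌₁,…,x̌_n, where σ is twice differentiable with |σ'|,|σ''| ≤ λ_σ, E[σ(ξ)]=0, E[σ(ξ)²]=1 for ξ ~ N(0,1). Then there are universal constants C, c > 0 such that, with probability at least 1 − 2n²e^{−c ď ε²}, simultaneously for all α ≠ β ∈ {1,…,n}: |‖x̌_α‖² − 1| ≤ Cλ_σ²ε and |x̌_αᵀx̌_β| ≤ Cλ_σ²ε. -/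
/-!
Lemma (concentration of columns of `X̌ = σ(WX)/√ď`): with probability at least
`1 − 2n²e^{−cďε²}`, all squared column norms are `Cλ_σ²ε`-close to `1` and all pairwise
inner products are bounded by `Cλ_σ²ε`.
-/

open MeasureTheory ProbabilityTheory Filter Topology Matrix

noncomputable abbrev stdGaussian : Measure ℝ := gaussianReal 0 1

noncomputable abbrev gaussianVec (d : ℕ) : Measure (Fin d → ℝ) :=
  Measure.pi fun _ => stdGaussian

noncomputable abbrev gaussianMat (a b : ℕ) : Measure (Fin a → Fin b → ℝ) :=
  Measure.pi fun _ => gaussianVec b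

/-- ℓ₂→ℓ₂ operator norm of a real matrix. -/
noncomputable def opNorm {m n : ℕ} (X : Matrix (Fin m) (Fin n) ℝ) : ℝ :=
  ‖LinearMap.toContinuousLinearMap (Matrix.toEuclideanLin X)‖

/-- `(ε,B)`-orthonormality of the columns of a matrix. -/
def IsOrthonormal {d n : ℕ} (ε B : ℝ) (X : Matrix (Fin d) (Fin n) ℝ) : Prop :=
  (∀ α : Fin n, |(∑ i, X i α ^ 2) - 1| ≤ ε) ∧
  (∀ α β : Fin n, α ≠ β → |∑ i, X i α * X i β| ≤ ε) ∧
  opNorm X ≤ B ∧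
  ∑ α : Fin n, ((∑ i, X i α ^ 2) - 1) ^ 2 ≤ B ^ 2


def dotp {d : ℕ} (x w : Fin d → ℝ) : ℝ := ∑ i, w i * x i

lemma dotp_cont {d : ℕ} (x : Fin d → ℝ) : Continuous (dotp x) := by
  unfold dotp; fun_prop

noncomputable def dotL {d : ℕ} (x : Fin d → ℝ) : (Fin d → ℝ) →L[ℝ] ℝ :=
  ∑ i, (x i) • ContinuousLinearMap.proj (R := ℝ) (φ := fun _ : Fin d => ℝ) i

lemma dotL_apply {d : ℕ} (x w : Fin d → ℝ) : dotL x w = dotp x w := by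
  simp [dotL, dotp, mul_comm]

lemma gv_law (d : ℕ) : HasGaussianLaw (fun w : Fin d → ℝ => w) (gaussianVec d) := by
  have h : iIndepFun (fun (i : Fin d) (w : Fin d → ℝ) => w i) (gaussianVec d) :=
    iIndepFun_pi (X := fun _ => id) (fun i => aemeasurable_id)
  refine h.hasGaussianLaw (fun i => ?_)
  have := (measurePreserving_eval (fun _ : Fin d => gaussianReal 0 1) i)
  constructor
  have h2 : Measure.map (fun w : Fin d → ℝ => w i) (gaussianVec d) = gaussianReal 0 1 := this.map_eq
  rw [h2]; infer_instance

lemma gv_eval_map {d : ℕ} (i : Fin d) :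
    Measure.map (fun w : Fin d → ℝ => w i) (gaussianVec d) = gaussianReal 0 1 :=
  (measurePreserving_eval (fun _ : Fin d => gaussianReal 0 1) i).map_eq

lemma gv_meas {d : ℕ} (i : Fin d) :
    AEMeasurable (fun w : Fin d → ℝ => w i) (gaussianVec d) :=
  (measurable_pi_apply i).aemeasurable

lemma gv_memLp {d : ℕ} (i : Fin d) : MemLp (fun w : Fin d → ℝ => w i) 2 (gaussianVec d) := by
  have := memLp_id_gaussianReal' (μ := 0) (v := 1) 2 (by simp)
  rw [← gv_eval_map i] at this
  exact (memLp_map_measure_iff aestronglyMeasurable_id (gv_meas i)).1 this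

lemma dotp_memLp {d : ℕ} (x : Fin d → ℝ) : MemLp (dotp x) 2 (gaussianVec d) := by
  unfold dotp
  exact memLp_finsetSum _ (fun i _ => (gv_memLp i).mul_const _)

lemma gv_eval_int {d : ℕ} (i : Fin d) : ∫ w, w i ∂(gaussianVec d) = 0 := by
  have h := integral_id_gaussianReal (μ := 0) (v := 1)
  rw [← gv_eval_map i, integral_map (gv_meas i) (by fun_prop)] at h
  exact h

lemma gv_eval_var {d : ℕ} (i : Fin d) :
    Var[fun w : Fin d → ℝ => w i; gaussianVec d] = 1 := by
  have h := variance_fun_id_gaussianReal (μ := 0) (v := 1)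
  rw [← gv_eval_map i, variance_map (by fun_prop) (gv_meas i)] at h
  simpa [Function.comp_def] using h

lemma dotp_int {d : ℕ} (x : Fin d → ℝ) : ∫ w, dotp x w ∂(gaussianVec d) = 0 := by
  unfold dotp
  rw [integral_finsetSum]
  · simp [integral_mul_const, gv_eval_int]
  · intro i _
    exact ((gv_memLp i).integrable (by norm_num)).mul_const _

lemma gv_cov {d : ℕ} (i j : Fin d) :
    cov[fun w : Fin d → ℝ => w i, fun w => w j; gaussianVec d] = if i = j then 1 else 0 := by
  split_ifs with h
  · subst h
    rw [covariance_self (gv_meas i), gv_eval_var]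
  · have hI : iIndepFun (fun (i : Fin d) (w : Fin d → ℝ) => w i) (gaussianVec d) :=
      iIndepFun_pi (X := fun _ => id) (fun i => aemeasurable_id)
    exact (hI.indepFun h).covariance_eq_zero (gv_memLp i) (gv_memLp j)

lemma dotp_cov {d : ℕ} (x y : Fin d → ℝ) :
    cov[dotp x, dotp y; gaussianVec d] = ∑ i, x i * y i := by
  unfold dotp
  rw [covariance_fun_sum_fun_sum]
  · simp_rw [covariance_mul_const_left, covariance_mul_const_right, gv_cov]
    simp [mul_comm]
  · exact fun i => (gv_memLp i).mul_const _
  · exact fun i => (gv_memLp i).mul_const _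

lemma dotp_law {d : ℕ} (x : Fin d → ℝ) :
    Measure.map (dotp x) (gaussianVec d) =
      Measure.map (fun z => Real.sqrt (∑ i, x i ^ 2) * z) (gaussianReal 0 1) := by
  have h : HasGaussianLaw (dotp x) (gaussianVec d) := by
    have := (gv_law d).map_fun (dotL x)
    simpa [dotL_apply] using this
  rw [h.map_eq_gaussianReal, gaussianReal_map_const_mul, dotp_int]
  have hv : Var[dotp x; gaussianVec d] = ∑ i, x i ^ 2 := by
    rw [← covariance_self (dotp_cont x).aemeasurable, dotp_cov]
    simp [sq]
  rw [hv]
  congr 1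
  · simp
  · ext
    have : 0 ≤ ∑ i, x i ^ 2 := Finset.sum_nonneg (fun i _ => sq_nonneg _)
    simp [Real.sq_sqrt this, this]

lemma dotp_indep {d : ℕ} (x y : Fin d → ℝ) (h : ∑ i, x i * y i = 0) :
    IndepFun (dotp x) (dotp y) (gaussianVec d) := by
  apply HasGaussianLaw.indepFun_of_covariance_eq_zero
  · have := (gv_law d).map_fun ((dotL x).prod (dotL y))
    simpa [dotL_apply] using this
  · rw [dotp_cov, h]

lemma dotp_integral {d : ℕ} (x : Fin d → ℝ) (f : ℝ → ℝ) (hf : Continuous f) :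
    ∫ w, f (dotp x w) ∂(gaussianVec d) =
      ∫ z, f (Real.sqrt (∑ i, x i ^ 2) * z) ∂(gaussianReal 0 1) := by
  rw [← integral_map (φ := dotp x) (dotp_cont x).aemeasurable hf.aestronglyMeasurable, dotp_law,
    integral_map (by fun_prop) hf.aestronglyMeasurable]

lemma dotp_integrable {d : ℕ} (x : Fin d → ℝ) (f : ℝ → ℝ) (hf : Continuous f)
    (h : Integrable (fun z => f (Real.sqrt (∑ i, x i ^ 2) * z)) (gaussianReal 0 1)) :
    Integrable (fun w => f (dotp x w)) (gaussianVec d) := by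
  have h1 : Integrable f (Measure.map (dotp x) (gaussianVec d)) := by
    rw [dotp_law]
    exact (integrable_map_measure hf.aestronglyMeasurable (by fun_prop)).2 h
  exact (integrable_map_measure hf.aestronglyMeasurable (dotp_cont x).aemeasurable).1 h1

lemma dotp_sq_int {d : ℕ} (x : Fin d → ℝ) :
    ∫ w, dotp x w ^ 2 ∂(gaussianVec d) = ∑ i, x i ^ 2 := by
  have h := dotp_cov x x
  rw [covariance_self (dotp_cont x).aemeasurable,
    variance_of_integral_eq_zero (dotp_cont x).aemeasurable (dotp_int x)] at h
  rw [h]; simp [sq]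

lemma g_sq_integrable : Integrable (fun z : ℝ => z ^ 2) (gaussianReal 0 1) :=
  (memLp_id_gaussianReal' (μ := 0) (v := 1) 2 (by simp)).integrable_sq

lemma g_sq_int : ∫ z, z ^ 2 ∂(gaussianReal 0 1) = 1 := by
  have h := variance_fun_id_gaussianReal (μ := 0) (v := 1)
  rw [variance_of_integral_eq_zero (by fun_prop) (by simp)] at h
  simpa using h

lemma g_exp_form (z : ℝ) : gaussianPDFReal 0 1 z * Real.exp (z ^ 2 / 4) =
    (Real.sqrt (2 * Real.pi))⁻¹ * Real.exp (- (1/4) * z ^ 2) := by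
  rw [gaussianPDFReal, mul_assoc, ← Real.exp_add]
  simp
  left; ring

lemma g_exp_integrable : Integrable (fun z : ℝ => Real.exp (z ^ 2 / 4)) (gaussianReal 0 1) := by
  rw [gaussianReal_of_var_ne_zero _ one_ne_zero,
    integrable_withDensity_iff_integrable_smul' (measurable_gaussianPDF _ _)
      (Eventually.of_forall fun _ => gaussianPDF_lt_top)]
  simp only [toReal_gaussianPDF, smul_eq_mul, g_exp_form]
  exact (integrable_exp_neg_mul_sq (by norm_num)).const_mul _

lemma g_exp_int : ∫ z, Real.exp (z ^ 2 / 4) ∂(gaussianReal 0 1) = Real.sqrt 2 := by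
  rw [integral_gaussianReal_eq_integral_smul one_ne_zero]
  simp only [smul_eq_mul, g_exp_form]
  rw [integral_const_mul, integral_gaussian, inv_mul_eq_div, ← Real.sqrt_div (by positivity)]
  congr 1
  field_simp
  norm_num

lemma g_bd (f : ℝ → ℝ) (hf : Continuous f) (A B : ℝ) (h : ∀ z, |f z| ≤ A + B * z ^ 2) :
    Integrable f (gaussianReal 0 1) ∧ |∫ z, f z ∂(gaussianReal 0 1)| ≤ A + B := by
  have hi : Integrable (fun z : ℝ => A + B * z ^ 2) (gaussianReal 0 1) :=
    (integrable_const A).add (g_sq_integrable.const_mul B)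
  refine ⟨hi.mono' hf.aestronglyMeasurable (Eventually.of_forall h), ?_⟩
  calc |∫ z, f z ∂(gaussianReal 0 1)| ≤ ∫ z, (A + B * z ^ 2) ∂(gaussianReal 0 1) :=
        norm_integral_le_of_norm_le (f := f) hi (Eventually.of_forall h)
    _ = A + B := by
        rw [integral_add (integrable_const A) (g_sq_integrable.const_mul B), integral_const_mul,
          g_sq_int]
        simp

lemma v_bd {d : ℕ} (x y : Fin d → ℝ) (f : (Fin d → ℝ) → ℝ) (hf : Continuous f) (A B B' : ℝ)
    (h : ∀ w, |f w| ≤ A + B * dotp x w ^ 2 + B' * dotp y w ^ 2) :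
    Integrable f (gaussianVec d) ∧
      |∫ w, f w ∂(gaussianVec d)| ≤ A + B * ∑ i, x i ^ 2 + B' * ∑ i, y i ^ 2 := by
  have h1 := (dotp_memLp x).integrable_sq.const_mul B
  have h2 := (dotp_memLp y).integrable_sq.const_mul B'
  have h0 : Integrable (fun _ : Fin d → ℝ => A) (gaussianVec d) := integrable_const A
  have h3 : Integrable (fun w => A + B * dotp x w ^ 2) (gaussianVec d) := h0.add h1
  have hi : Integrable (fun w => A + B * dotp x w ^ 2 + B' * dotp y w ^ 2) (gaussianVec d) :=
    h3.add h2
  refine ⟨hi.mono' hf.aestronglyMeasurable (Eventually.of_forall h), ?_⟩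
  calc |∫ w, f w ∂(gaussianVec d)| ≤ ∫ w, (A + B * dotp x w ^ 2 + B' * dotp y w ^ 2) ∂(gaussianVec d) :=
        norm_integral_le_of_norm_le (f := f) hi (Eventually.of_forall h)
    _ = A + B * ∑ i, x i ^ 2 + B' * ∑ i, y i ^ 2 := by
        rw [integral_add h3 h2, integral_add h0 h1, integral_const_mul,
          integral_const_mul, dotp_sq_int, dotp_sq_int]
        simp

structure Good (σ : ℝ → ℝ) (lam : ℝ) : Prop where
  cont : Continuous σ
  lip : ∀ x y, |σ x - σ y| ≤ lam * |x - y|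
  one_le : 1 ≤ lam
  growth : ∀ x, |σ x| ≤ lam * (1 + |x|)
  zero : ∫ z, σ z ∂(gaussianReal 0 1) = 0
  one : ∫ z, σ z ^ 2 ∂(gaussianReal 0 1) = 1

lemma good_of {σ σ' : ℝ → ℝ} {lam : ℝ} (hd : ∀ x, HasDerivAt σ (σ' x) x)
    (hb : ∀ x, |σ' x| ≤ lam) (hz : ∫ z, σ z ∂(gaussianReal 0 1) = 0)
    (h1 : ∫ z, σ z ^ 2 ∂(gaussianReal 0 1) = 1) : Good σ lam := by
  have hc : Continuous σ := continuous_iff_continuousAt.2 fun x => (hd x).continuousAt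
  have hl0 : 0 ≤ lam := (abs_nonneg _).trans (hb 0)
  have lip : ∀ x y, |σ x - σ y| ≤ lam * |x - y| := fun x y =>
    convex_univ.norm_image_sub_le_of_norm_hasDerivWithin_le
      (fun z _ => (hd z).hasDerivWithinAt) (fun z _ => hb z) (Set.mem_univ y) (Set.mem_univ x)
  have hq : ∀ z, |(σ z - σ 0) ^ 2| ≤ 0 + lam ^ 2 * z ^ 2 := fun z => by
    rw [abs_pow, zero_add, ← mul_pow, ← sq_abs (lam * z), abs_mul, abs_of_nonneg hl0]
    have := lip z 0
    rw [sub_zero] at this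
    gcongr
  have hA := g_bd (fun z => (σ z - σ 0) ^ 2) (by fun_prop) _ _ hq
  have hlin : ∀ z, |σ z| ≤ (|σ 0| + lam) + lam * z ^ 2 := fun z => by
    have := lip z 0
    rw [sub_zero] at this
    have h2 := abs_sub_abs_le_abs_sub (σ z) (σ 0)
    have h3 : |z| ≤ 1 + z ^ 2 := by nlinarith [sq_abs z, sq_nonneg (|z| - 1), abs_nonneg z]
    nlinarith
  have hi1 := (g_bd σ hc _ _ hlin).1
  have hi2 : Integrable (fun z => σ z ^ 2) (gaussianReal 0 1) := by
    by_contra h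
    rw [integral_undef h] at h1
    norm_num at h1
  have e : ∫ z, (σ z - σ 0) ^ 2 ∂(gaussianReal 0 1) = 1 + σ 0 ^ 2 := by
    have : ∀ z, (σ z - σ 0) ^ 2 = (σ z ^ 2 - (2 * σ 0) * σ z) + σ 0 ^ 2 := fun z => by ring
    simp_rw [this]
    have hi3 : Integrable (fun z => σ z ^ 2 - (2 * σ 0) * σ z) (gaussianReal 0 1) :=
      hi2.sub (hi1.const_mul _)
    rw [integral_add hi3 (integrable_const _),
      integral_sub hi2 (hi1.const_mul _), integral_const_mul, hz, h1]
    simp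
  have hv : 1 + σ 0 ^ 2 ≤ lam ^ 2 := by
    rw [← e]
    have := (le_abs_self _).trans hA.2
    linarith
  have s0 : |σ 0| ≤ lam := abs_le_of_sq_le_sq (by linarith) hl0
  refine ⟨hc, lip, by nlinarith [sq_nonneg (σ 0)], fun x => ?_, hz, h1⟩
  have := lip x 0
  rw [sub_zero] at this
  have h2 := abs_sub_abs_le_abs_sub (σ x) (σ 0)
  linarith

lemma prod_bd {σ : ℝ → ℝ} {lam : ℝ} (H : Good σ lam) (u v : ℝ) :
    |σ u * σ v| ≤ lam ^ 2 * (2 + u ^ 2 + v ^ 2) := by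
  have h0 : 0 ≤ lam := by linarith [H.one_le]
  rw [abs_mul]
  calc |σ u| * |σ v| ≤ (lam * (1 + |u|)) * (lam * (1 + |v|)) :=
        mul_le_mul (H.growth u) (H.growth v) (abs_nonneg _) (by positivity)
    _ = lam ^ 2 * ((1 + |u|) * (1 + |v|)) := by ring
    _ ≤ _ := by
      gcongr
      nlinarith [sq_abs u, sq_abs v, sq_nonneg (|u| - |v|), sq_nonneg (|u| - 1),
        sq_nonneg (|v| - 1)]

lemma sqrt_near {a ε : ℝ} (ha : 0 ≤ a) (h : |a - 1| ≤ ε) : |Real.sqrt a - 1| ≤ ε := by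
  refine le_trans ?_ h
  have h1 : a - 1 = (Real.sqrt a - 1) * (Real.sqrt a + 1) := by nlinarith [Real.sq_sqrt ha]
  rw [h1, abs_mul]
  have h2 : 1 ≤ |Real.sqrt a + 1| := by
    rw [abs_of_nonneg (by positivity)]; linarith [Real.sqrt_nonneg a]
  nlinarith [abs_nonneg (Real.sqrt a - 1)]

lemma mean_diag {σ : ℝ → ℝ} {lam ε : ℝ} (H : Good σ lam) (hε0 : 0 ≤ ε) (hε : ε ≤ 1) {d : ℕ}
    (x : Fin d → ℝ) (hx : |∑ i, x i ^ 2 - 1| ≤ ε) :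
    |∫ w, σ (dotp x w) * σ (dotp x w) ∂(gaussianVec d) - 1| ≤ 12 * lam ^ 2 * ε := by
  have h0 : 0 ≤ lam := by linarith [H.one_le]
  have hc := H.cont
  rw [dotp_integral x (fun t => σ t * σ t) (by fun_prop)]
  have ha : 0 ≤ ∑ i, x i ^ 2 := Finset.sum_nonneg (fun i _ => sq_nonneg _)
  have hs := sqrt_near ha hx
  set s := Real.sqrt (∑ i, x i ^ 2) with hsdef
  have hs0 : 0 ≤ s := Real.sqrt_nonneg _
  have hs2 : s ≤ 2 := by linarith [(abs_le.1 hs).2]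
  have key : ∀ z, |σ (s * z) * σ (s * z) - σ z ^ 2| ≤
      lam ^ 2 * ε * 1 + lam ^ 2 * ε * 4 * z ^ 2 := fun z => by
    have e : σ (s * z) * σ (s * z) - σ z ^ 2 = (σ (s * z) - σ z) * (σ (s * z) + σ z) := by ring
    rw [e, abs_mul]
    have h1 : |σ (s * z) - σ z| ≤ lam * (ε * |z|) := by
      refine (H.lip _ _).trans ?_
      have : s * z - z = (s - 1) * z := by ring
      rw [this, abs_mul]
      gcongr
    have h2 : |σ (s * z) + σ z| ≤ lam * (2 + 3 * |z|) := by
      refine (abs_add_le _ _).trans ?_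
      have g1 := H.growth (s * z)
      have g2 := H.growth z
      rw [abs_mul, abs_of_nonneg hs0] at g1
      have : s * |z| ≤ 2 * |z| := by gcongr
      nlinarith
    calc _ ≤ (lam * (ε * |z|)) * (lam * (2 + 3 * |z|)) :=
          mul_le_mul h1 h2 (abs_nonneg _) (by positivity)
      _ = lam ^ 2 * ε * (|z| * (2 + 3 * |z|)) := by ring
      _ ≤ lam ^ 2 * ε * (1 + 4 * z ^ 2) := by
        gcongr
        nlinarith [sq_abs z, sq_nonneg (|z| - 1)]
      _ = _ := by ring
  have hB := g_bd (fun z => σ (s * z) * σ (s * z) - σ z ^ 2) (by fun_prop) _ _ key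
  have hi2 : Integrable (fun z => σ z ^ 2) (gaussianReal 0 1) := by
    by_contra h
    have h1 := H.one
    rw [integral_undef h] at h1
    norm_num at h1
  have hi3 : Integrable (fun z => σ (s * z) * σ (s * z)) (gaussianReal 0 1) := by
    refine (hB.1.add hi2).congr (Eventually.of_forall fun z => ?_)
    simp
  have := hB.2
  rw [integral_sub hi3 hi2, H.one] at this
  refine this.trans ?_
  nlinarith [mul_nonneg (sq_nonneg lam) hε0]

lemma mean_one {σ : ℝ → ℝ} {lam ε : ℝ} (H : Good σ lam) (hε0 : 0 ≤ ε) {d : ℕ}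
    (x : Fin d → ℝ) (hx : |∑ i, x i ^ 2 - 1| ≤ ε) :
    |∫ w, σ (dotp x w) ∂(gaussianVec d)| ≤ lam * ε := by
  have h0 : 0 ≤ lam := by linarith [H.one_le]
  have hc := H.cont
  rw [dotp_integral x σ hc]
  have ha : 0 ≤ ∑ i, x i ^ 2 := Finset.sum_nonneg (fun i _ => sq_nonneg _)
  have hs := sqrt_near ha hx
  set s := Real.sqrt (∑ i, x i ^ 2) with hsdef
  have key : ∀ z, |σ (s * z) - σ z| ≤ lam * ε * (1/2) + lam * ε * (1/2) * z ^ 2 := fun z => by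
    refine (H.lip _ _).trans ?_
    have : s * z - z = (s - 1) * z := by ring
    rw [this, abs_mul]
    calc lam * (|s - 1| * |z|) ≤ lam * (ε * |z|) := by gcongr
      _ = lam * ε * |z| := by ring
      _ ≤ lam * ε * (1/2 + 1/2 * z ^ 2) := by
        gcongr
        nlinarith [sq_abs z, sq_nonneg (|z| - 1)]
      _ = _ := by ring
  have hB := g_bd (fun z => σ (s * z) - σ z) (by fun_prop) _ _ key
  have hi2 : Integrable σ (gaussianReal 0 1) := by
    refine (g_bd σ hc (2 * lam) lam fun z => (H.growth z).trans ?_).1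
    have h3 : |z| ≤ 1 + z ^ 2 := by nlinarith [sq_abs z, sq_nonneg (|z| - 1), abs_nonneg z]
    nlinarith
  have hi3 : Integrable (fun z => σ (s * z)) (gaussianReal 0 1) := by
    refine (hB.1.add hi2).congr (Eventually.of_forall fun z => ?_)
    simp
  have := hB.2
  rw [integral_sub hi3 hi2, H.zero, sub_zero] at this
  linarith

lemma mean_cross {σ : ℝ → ℝ} {lam ε : ℝ} (H : Good σ lam) (hε0 : 0 ≤ ε) (hε : ε ≤ 1) {d : ℕ}
    (x y : Fin d → ℝ) (hx : |∑ i, x i ^ 2 - 1| ≤ ε) (hy : |∑ i, y i ^ 2 - 1| ≤ ε)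
    (hxy : |∑ i, x i * y i| ≤ ε) :
    |∫ w, σ (dotp x w) * σ (dotp y w) ∂(gaussianVec d)| ≤ 12 * lam ^ 2 * ε := by
  have h0 : 0 ≤ lam := by linarith [H.one_le]
  have hc := H.cont
  have cx := dotp_cont x
  have cy := dotp_cont y
  have hB0 := v_bd x y (fun w => σ (dotp x w) * σ (dotp y w)) (by fun_prop)
      (2 * lam ^ 2) (lam ^ 2) (lam ^ 2) (fun w => (prod_bd H _ _).trans (le_of_eq (by ring)))
  set a := ∑ i, x i ^ 2 with hadef
  set b := ∑ i, y i ^ 2 with hbdef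
  set r := ∑ i, x i * y i with hrdef
  have ha2 : a ≤ 2 := by linarith [(abs_le.1 hx).2]
  have hb2 : b ≤ 2 := by linarith [(abs_le.1 hy).2]
  have hl2 : 0 ≤ lam ^ 2 := sq_nonneg _
  by_cases hh : 1/2 ≤ ε
  · refine hB0.2.trans ?_
    nlinarith
  push Not at hh
  have ha1 : 1/2 ≤ a := by linarith [(abs_le.1 hx).1]
  set t := r / a with ht
  have hta : t * a = r := by rw [ht]; field_simp
  have ht2 : |t| ≤ 2 * ε := by
    rw [ht, abs_div, abs_of_pos (by linarith : 0 < a), div_le_iff₀ (by linarith)]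
    nlinarith
  set v : Fin d → ℝ := fun i => y i - t * x i with hv
  have cv := dotp_cont v
  have hyv : ∀ w, dotp y w = dotp v w + t * dotp x w := fun w => by
    simp only [dotp, hv, Finset.mul_sum, ← Finset.sum_add_distrib]
    exact Finset.sum_congr rfl fun i _ => by ring
  have horth : ∑ i, x i * v i = 0 := by
    have : ∑ i, x i * v i = r - t * a := by
      simp only [hrdef, hadef, hv, Finset.mul_sum, ← Finset.sum_sub_distrib]
      exact Finset.sum_congr rfl fun i _ => by ring
    rw [this, hta, sub_self]
  have hvn : ∑ i, v i ^ 2 ≤ 2 := by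
    have : ∑ i, v i ^ 2 = b - 2 * t * r + t ^ 2 * a := by
      simp only [hrdef, hadef, hbdef, hv, Finset.mul_sum, ← Finset.sum_sub_distrib,
        ← Finset.sum_add_distrib]
      exact Finset.sum_congr rfl fun i _ => by ring
    rw [this, ← hta]
    nlinarith [mul_nonneg (sq_nonneg t) (by linarith : 0 ≤ a)]
  -- difference term
  have hD := v_bd x x (fun w => σ (dotp x w) * (σ (dotp y w) - σ (dotp v w))) (by fun_prop)
      (lam ^ 2 * ε) (lam ^ 2 * ε * 3) 0 (fun w => by
    rw [abs_mul]
    have h2 : |σ (dotp y w) - σ (dotp v w)| ≤ lam * (2 * ε * |dotp x w|) := by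
      refine (H.lip _ _).trans ?_
      rw [hyv, add_sub_cancel_left, abs_mul]
      gcongr
    calc _ ≤ (lam * (1 + |dotp x w|)) * (lam * (2 * ε * |dotp x w|)) :=
          mul_le_mul (H.growth _) h2 (abs_nonneg _) (by positivity)
      _ = lam ^ 2 * ε * ((1 + |dotp x w|) * (2 * |dotp x w|)) := by ring
      _ ≤ lam ^ 2 * ε * (1 + 3 * dotp x w ^ 2) := by
        gcongr
        nlinarith [sq_abs (dotp x w), sq_nonneg (|dotp x w| - 1)]
      _ = _ := by ring)
  have hP := v_bd x v (fun w => σ (dotp x w) * σ (dotp v w)) (by fun_prop)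
      (2 * lam ^ 2) (lam ^ 2) (lam ^ 2) (fun w => (prod_bd H _ _).trans (le_of_eq (by ring)))
  have hV := v_bd v v (fun w => σ (dotp v w)) (by fun_prop)
      (lam * (3/2)) (lam * (1/2)) 0 (fun w => by
    refine (H.growth _).trans ?_
    have : 1 + |dotp v w| ≤ 3/2 + 1/2 * dotp v w ^ 2 := by
      nlinarith [sq_abs (dotp v w), sq_nonneg (|dotp v w| - 1)]
    nlinarith)
  have hX := mean_one H hε0 x hx
  have hind : ∫ w, σ (dotp x w) * σ (dotp v w) ∂(gaussianVec d) =
      (∫ w, σ (dotp x w) ∂(gaussianVec d)) * ∫ w, σ (dotp v w) ∂(gaussianVec d) := by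
    have h := (dotp_indep x v horth).comp hc.measurable hc.measurable
    exact h.integral_fun_mul_eq_mul_integral (by fun_prop) (by fun_prop)
  have hsplit : ∫ w, σ (dotp x w) * σ (dotp y w) ∂(gaussianVec d) =
      ∫ w, σ (dotp x w) * (σ (dotp y w) - σ (dotp v w)) ∂(gaussianVec d) +
      ∫ w, σ (dotp x w) * σ (dotp v w) ∂(gaussianVec d) := by
    rw [← integral_add hD.1 hP.1]
    congr 1; ext w; ring
  rw [hsplit, hind]
  refine (abs_add_le _ _).trans ?_
  rw [abs_mul]
  have hV2 : |∫ w, σ (dotp v w) ∂(gaussianVec d)| ≤ lam * (5/2) := by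
    refine hV.2.trans ?_
    nlinarith
  have hm := mul_le_mul hX hV2 (abs_nonneg _) (by positivity)
  have hD2 := hD.2
  have : 0 ≤ lam ^ 2 * ε := by positivity
  nlinarith

lemma exp_T {d : ℕ} (x y : Fin d → ℝ) (hx : ∑ i, x i ^ 2 ≤ 2) (hy : ∑ i, y i ^ 2 ≤ 2)
    (T : (Fin d → ℝ) → ℝ) (hT : Continuous T)
    (h : ∀ w, |T w| ≤ 2 + dotp x w ^ 2 + dotp y w ^ 2) :
    Integrable (fun w => Real.exp (|T w| / 16)) (gaussianVec d) ∧
      ∫ w, Real.exp (|T w| / 16) ∂(gaussianVec d) ≤ 2 := by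
  have key : ∀ x : Fin d → ℝ, ∑ i, x i ^ 2 ≤ 2 →
      Integrable (fun w => Real.exp (dotp x w ^ 2 / 8)) (gaussianVec d) ∧
      ∫ w, Real.exp (dotp x w ^ 2 / 8) ∂(gaussianVec d) ≤ Real.sqrt 2 := by
    intro x hx
    have ha : 0 ≤ ∑ i, x i ^ 2 := Finset.sum_nonneg (fun i _ => sq_nonneg _)
    have hle : ∀ z : ℝ, Real.exp ((Real.sqrt (∑ i, x i ^ 2) * z) ^ 2 / 8) ≤
        Real.exp (z ^ 2 / 4) := fun z => by
      apply Real.exp_le_exp.2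
      rw [mul_pow, Real.sq_sqrt ha]
      nlinarith [sq_nonneg z]
    have hi : Integrable (fun z => Real.exp ((Real.sqrt (∑ i, x i ^ 2) * z) ^ 2 / 8))
        (gaussianReal 0 1) :=
      g_exp_integrable.mono' (by fun_prop) (Eventually.of_forall fun z => by
        rw [Real.norm_eq_abs, abs_of_pos (Real.exp_pos _)]; exact hle z)
    refine ⟨dotp_integrable x (fun t => Real.exp (t ^ 2 / 8)) (by fun_prop) hi, ?_⟩
    rw [dotp_integral x (fun t => Real.exp (t ^ 2 / 8)) (by fun_prop), ← g_exp_int]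
    exact integral_mono hi g_exp_integrable hle
  obtain ⟨ix, bx⟩ := key x hx
  obtain ⟨iy, bY⟩ := key y hy
  have hp : ∀ w, Real.exp (|T w| / 16) ≤ Real.exp (1/8) / 2 *
      (Real.exp (dotp x w ^ 2 / 8) + Real.exp (dotp y w ^ 2 / 8)) := fun w => by
    have e1 : Real.exp (|T w| / 16) ≤
        Real.exp (1/8) * (Real.exp (dotp x w ^ 2 / 16) * Real.exp (dotp y w ^ 2 / 16)) := by
      rw [← Real.exp_add, ← Real.exp_add]
      apply Real.exp_le_exp.2
      linarith [h w]
    have e2 : Real.exp (dotp x w ^ 2 / 8) = Real.exp (dotp x w ^ 2 / 16) ^ 2 := by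
      rw [← Real.exp_nat_mul]; congr 1; push_cast; ring
    have e3 : Real.exp (dotp y w ^ 2 / 8) = Real.exp (dotp y w ^ 2 / 16) ^ 2 := by
      rw [← Real.exp_nat_mul]; congr 1; push_cast; ring
    rw [e2, e3]
    refine e1.trans ?_
    have := Real.exp_pos (1/8)
    have h3 := two_mul_le_add_sq (Real.exp (dotp x w ^ 2 / 16)) (Real.exp (dotp y w ^ 2 / 16))
    nlinarith
  have hI : Integrable (fun w => Real.exp (1/8) / 2 *
      (Real.exp (dotp x w ^ 2 / 8) + Real.exp (dotp y w ^ 2 / 8))) (gaussianVec d) :=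
    (ix.add iy).const_mul _
  have hi : Integrable (fun w => Real.exp (|T w| / 16)) (gaussianVec d) :=
    hI.mono' (by fun_prop) (Eventually.of_forall fun w => by
        rw [Real.norm_eq_abs, abs_of_pos (Real.exp_pos _)]; exact hp w)
  refine ⟨hi, (integral_mono hi hI hp).trans ?_⟩
  rw [integral_const_mul, integral_add ix iy]
  have e8 : Real.exp (1/8) ≤ 8/7 := by
    have h1 := Real.add_one_le_exp (-(1/8))
    have h2 : Real.exp (-(1/8)) * Real.exp (1/8) = 1 := by rw [← Real.exp_add]; simp
    nlinarith [Real.exp_pos (1/8)]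
  have hs : Real.sqrt 2 ≤ 3/2 := by
    rw [Real.sqrt_le_left (by norm_num)]; norm_num
  have := Real.exp_pos (1/8)
  nlinarith

lemma exp_taylor (s : ℝ) : Real.exp s ≤ 1 + s + s ^ 2 * Real.exp |s| := by
  have h := Complex.norm_exp_sub_sum_le_norm_mul_exp (s : ℂ) 2
  have e : Complex.exp (s : ℂ) - ∑ m ∈ Finset.range 2, (s : ℂ) ^ m / (m.factorial : ℂ) =
      ((Real.exp s - (1 + s) : ℝ) : ℂ) := by
    simp [Finset.sum_range_succ]
  rw [e, Complex.norm_real, Complex.norm_real, Real.norm_eq_abs, Real.norm_eq_abs, sq_abs] at h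
  linarith [le_abs_self (Real.exp s - (1 + s))]

lemma mgf_bd {Ω : Type*} [MeasurableSpace Ω] (P : Measure Ω) [IsProbabilityMeasure P]
    (T : Ω → ℝ) (hT : Measurable T)
    (hi : Integrable (fun w => Real.exp (|T w| / 16)) P)
    (h2 : ∫ w, Real.exp (|T w| / 16) ∂P ≤ 2) (t : ℝ) (ht : |t| ≤ 1/32) :
    Integrable (fun w => Real.exp (t * T w)) P ∧
    ∫ w, Real.exp (t * T w) ∂P ≤ Real.exp (t * ∫ w, T w ∂P + 4096 * t ^ 2) := by
  have hiT : Integrable T P := by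
    refine (hi.const_mul 16).mono' hT.aestronglyMeasurable (Eventually.of_forall fun w => ?_)
    have := Real.add_one_le_exp (|T w| / 16)
    rw [Real.norm_eq_abs]
    linarith
  have hb : ∀ w, Real.exp (t * T w) ≤ 1 + t * T w + 2048 * t ^ 2 * Real.exp (|T w| / 16) := by
    intro w
    refine (exp_taylor _).trans ?_
    have h1 : T w ^ 2 ≤ 2048 * Real.exp (|T w| / 32) := by
      have := Real.quadratic_le_exp_of_nonneg (x := |T w| / 32) (by positivity)
      nlinarith [sq_abs (T w), abs_nonneg (T w)]
    have h3 : Real.exp |t * T w| ≤ Real.exp (|T w| / 32) := by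
      apply Real.exp_le_exp.2
      rw [abs_mul]
      nlinarith [abs_nonneg (T w)]
    have h4 : Real.exp (|T w| / 16) = Real.exp (|T w| / 32) * Real.exp (|T w| / 32) := by
      rw [← Real.exp_add]; congr 1; ring
    have h5 := mul_le_mul h1 h3 (Real.exp_pos _).le (by positivity)
    rw [h4, mul_pow]
    have := mul_le_mul_of_nonneg_left h5 (sq_nonneg t)
    linarith
  have i1 : Integrable (fun w => 1 + t * T w) P := (integrable_const 1).add (hiT.const_mul t)
  have i2 := hi.const_mul (2048 * t ^ 2)
  have i3 : Integrable (fun w => 1 + t * T w + 2048 * t ^ 2 * Real.exp (|T w| / 16)) P := i1.add i2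
  have i4 : Integrable (fun w => Real.exp (t * T w)) P :=
    i3.mono' (by fun_prop) (Eventually.of_forall fun w => by
        rw [Real.norm_eq_abs, abs_of_pos (Real.exp_pos _)]; exact hb w)
  refine ⟨i4, (integral_mono i4 i3 hb).trans ?_⟩
  rw [integral_add i1 i2, integral_add (integrable_const 1) (hiT.const_mul t),
    integral_const_mul, integral_const_mul]
  refine le_trans ?_ (Real.add_one_le_exp _)
  simp only [integral_const, probReal_univ, smul_eq_mul, mul_one]
  nlinarith [sq_nonneg t]

lemma chernoff {Ω : Type*} [MeasurableSpace Ω] (P : Measure Ω) [IsProbabilityMeasure P]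
    (T : Ω → ℝ) (hT : Measurable T)
    (hi : Integrable (fun w => Real.exp (|T w| / 16)) P)
    (h2 : ∫ w, Real.exp (|T w| / 16) ∂P ≤ 2) (ε : ℝ) (h0 : 0 ≤ ε) (h1 : ε ≤ 1) (N : ℕ) :
    (Measure.pi fun _ : Fin N => P).real
      {W | N * (∫ w, T w ∂P) + N * (160 * ε) ≤ ∑ k, T (W k)} ≤ Real.exp (-1 * N * ε ^ 2) := by
  obtain ⟨a1, a2⟩ := mgf_bd P T hT hi h2 (ε / 32) (by rw [abs_of_nonneg (by positivity)]; linarith)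
  have e : ∀ W : Fin N → Ω, Real.exp (ε / 32 * ∑ k, T (W k)) =
      ∏ k, Real.exp (ε / 32 * T (W k)) := fun W => by
    rw [Finset.mul_sum, Real.exp_sum]
  have := measure_ge_le_exp_mul_mgf (μ := Measure.pi fun _ : Fin N => P)
    (X := fun W => ∑ k, T (W k)) (t := ε / 32) (N * (∫ w, T w ∂P) + N * (160 * ε))
    (by positivity) (by
      simp_rw [e]
      exact Integrable.fintype_prod (f := fun _ w => Real.exp (ε / 32 * T w)) (fun _ => a1))
  refine this.trans ?_
  unfold mgf
  simp_rw [e]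
  rw [integral_fintype_prod_eq_pow (fun w => Real.exp (ε / 32 * T w)), Fintype.card_fin]
  calc _ ≤ Real.exp (-(ε / 32) * (N * (∫ w, T w ∂P) + N * (160 * ε))) *
        (Real.exp (ε / 32 * ∫ w, T w ∂P + 4096 * (ε / 32) ^ 2)) ^ N := by
        gcongr
    _ = Real.exp (-1 * N * ε ^ 2) := by
        rw [← Real.exp_nat_mul, ← Real.exp_add]
        congr 1
        ring

lemma two_sided {Ω : Type*} [MeasurableSpace Ω] (P : Measure Ω) [IsProbabilityMeasure P]
    (T : Ω → ℝ) (hT : Measurable T)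
    (hi : Integrable (fun w => Real.exp (|T w| / 16)) P)
    (h2 : ∫ w, Real.exp (|T w| / 16) ∂P ≤ 2) (ε : ℝ) (h0 : 0 ≤ ε) (h1 : ε ≤ 1) (N : ℕ) :
    (Measure.pi fun _ : Fin N => P).real
      {W | N * (160 * ε) ≤ |∑ k, T (W k) - N * (∫ w, T w ∂P)|} ≤
        2 * Real.exp (-1 * N * ε ^ 2) := by
  have A := chernoff P T hT hi h2 ε h0 h1 N
  have B := chernoff P (fun w => - T w) hT.neg (by simpa using hi) (by simpa using h2) ε h0 h1 N
  refine (measureReal_mono (s₂ := {W | N * (∫ w, T w ∂P) + N * (160 * ε) ≤ ∑ k, T (W k)} ∪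
    {W | N * (∫ w, - T w ∂P) + N * (160 * ε) ≤ ∑ k, - T (W k)}) ?_).trans ?_
  · intro W hW
    simp only [Set.mem_setOf_eq, Set.mem_union] at hW ⊢
    rw [integral_neg, Finset.sum_neg_distrib]
    rcases le_abs.1 hW with h | h
    · left; linarith
    · right; linarith
  · refine (measureReal_union_le _ _).trans ?_
    linarith

theorem column_concentration :
    ∃ C : ℝ, 0 < C ∧ ∃ c : ℝ, 0 < c ∧
      ∀ (d n dc : ℕ) (X : Matrix (Fin d) (Fin n) ℝ) (ε B lamσ : ℝ)
        (σ σ' σ'' : ℝ → ℝ),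
        (∀ x, HasDerivAt σ (σ' x) x) →
        (∀ x, HasDerivAt σ' (σ'' x) x) →
        (∀ x, |σ' x| ≤ lamσ) →
        (∀ x, |σ'' x| ≤ lamσ) →
        (∫ x, σ x ∂stdGaussian) = 0 →
        (∫ x, (σ x) ^ 2 ∂stdGaussian) = 1 →
        IsOrthonormal ε B X →
        ε < 1 / lamσ →
        gaussianMat dc d
            {W | (∀ α : Fin n,
                |(∑ k, ((Real.sqrt dc)⁻¹ • ((Matrix.of W * X).map σ)) k α ^ 2) - 1| ≤
                  C * lamσ ^ 2 * ε) ∧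
              ∀ α β : Fin n, α ≠ β →
                |∑ k, ((Real.sqrt dc)⁻¹ • ((Matrix.of W * X).map σ)) k α *
                    ((Real.sqrt dc)⁻¹ • ((Matrix.of W * X).map σ)) k β| ≤
                  C * lamσ ^ 2 * ε} ≥
          ENNReal.ofReal (1 - 2 * (n : ℝ) ^ 2 * Real.exp (-c * dc * ε ^ 2)) := by
  refine ⟨172, by norm_num, 1, by norm_num, ?_⟩
  intro d n N X ε B lam σ σ' σ'' hd _ hb _ hz hone hX hε
  have H : Good σ lam := good_of hd hb hz hone
  have hl1 := H.one_le
  have hl0 : 0 < lam := by linarith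
  have hε1 : ε ≤ 1 := by
    refine hε.le.trans ?_
    rw [div_le_one hl0]; exact hl1
  obtain ⟨hdiag, hoff, -, -⟩ := hX
  rcases Nat.eq_zero_or_pos n with hn | hn
  · subst hn
    have : {W : Fin N → Fin d → ℝ | (∀ α : Fin 0,
                |(∑ k, ((Real.sqrt N)⁻¹ • ((Matrix.of W * X).map σ)) k α ^ 2) - 1| ≤
                  172 * lam ^ 2 * ε) ∧
              ∀ α β : Fin 0, α ≠ β →
                |∑ k, ((Real.sqrt N)⁻¹ • ((Matrix.of W * X).map σ)) k α *
                    ((Real.sqrt N)⁻¹ • ((Matrix.of W * X).map σ)) k β| ≤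
                  172 * lam ^ 2 * ε} = Set.univ := by
      ext W; simp
    rw [this, measure_univ]
    simp
  have hε0 : 0 ≤ ε := (abs_nonneg _).trans (hdiag ⟨0, hn⟩)
  have hn1 : (1 : ℝ) ≤ (n : ℝ) ^ 2 := by
    have : (1 : ℝ) ≤ n := by exact_mod_cast hn
    nlinarith
  rcases Nat.eq_zero_or_pos N with hN | hN
  · subst hN
    rw [ge_iff_le, ENNReal.ofReal_of_nonpos]
    · exact zero_le
    · simp only [CharP.cast_eq_zero, mul_zero, zero_mul, Real.exp_zero]
      linarith
  have hNr : (0 : ℝ) < N := by exact_mod_cast hN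
  -- the normalised products
  let T : Fin n → Fin n → (Fin d → ℝ) → ℝ := fun α β w =>
    σ (dotp (fun i => X i α) w) * σ (dotp (fun i => X i β) w) / lam ^ 2
  let bad : Fin n × Fin n → Set (Fin N → Fin d → ℝ) := fun p =>
    {W | N * (160 * ε) ≤ |∑ k, T p.1 p.2 (W k) - N * (∫ w, T p.1 p.2 w ∂(gaussianVec d))|}
  have hc := H.cont
  have hsum2 : ∀ α, ∑ i, X i α ^ 2 ≤ 2 := fun α => by
    linarith [(abs_le.1 (hdiag α)).2]
  have hbad : ∀ p, (gaussianMat N d).real (bad p) ≤ 2 * Real.exp (-1 * N * ε ^ 2) := by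
    rintro ⟨α, β⟩
    have cx := dotp_cont (fun i => X i α)
    have cy := dotp_cont (fun i => X i β)
    have hTc : Continuous (T α β) := by
      simp only [T]; fun_prop
    obtain ⟨i1, i2⟩ := exp_T (fun i => X i α) (fun i => X i β) (hsum2 α) (hsum2 β) (T α β) hTc
      (fun w => by
        simp only [T]
        rw [abs_div, abs_of_pos (by positivity : 0 < lam ^ 2), div_le_iff₀ (by positivity),
          mul_comm _ (lam ^ 2)]
        exact prod_bd H _ _)
    exact two_sided (gaussianVec d) (T α β) hTc.measurable i1 i2 ε hε0 hε1 N
  have hU : (gaussianMat N d).real (⋃ p, bad p) ≤ 2 * (n : ℝ) ^ 2 * Real.exp (-1 * N * ε ^ 2) := by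
    refine (measureReal_iUnion_fintype_le _).trans ?_
    refine (Finset.sum_le_sum fun p _ => hbad p).trans (le_of_eq ?_)
    simp
    ring
  -- value of the empirical quantities
  have hval : ∀ (W : Fin N → Fin d → ℝ) (α β : Fin n),
      ∑ k, ((Real.sqrt N)⁻¹ • ((Matrix.of W * X).map σ)) k α *
        ((Real.sqrt N)⁻¹ • ((Matrix.of W * X).map σ)) k β =
      lam ^ 2 / N * ∑ k, T α β (W k) := by
    intro W α β
    rw [Finset.mul_sum]
    refine Finset.sum_congr rfl fun k _ => ?_
    simp only [T, Matrix.smul_apply, Matrix.map_apply, Matrix.mul_apply, Matrix.of_apply,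
      smul_eq_mul, dotp]
    have hs : (Real.sqrt N)⁻¹ * (Real.sqrt N)⁻¹ = (N : ℝ)⁻¹ := by
      rw [← mul_inv, Real.mul_self_sqrt hNr.le]
    rw [mul_mul_mul_comm, hs]
    field_simp
  have hfin : ∀ (W : Fin N → Fin d → ℝ), W ∉ (⋃ p, bad p) → ∀ (α β : Fin n) (δ : ℝ),
      |∫ w, σ (dotp (fun i => X i α) w) * σ (dotp (fun i => X i β) w) ∂(gaussianVec d) - δ| ≤
        12 * lam ^ 2 * ε →
      |lam ^ 2 / N * ∑ k, T α β (W k) - δ| ≤ 172 * lam ^ 2 * ε := by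
    intro W hW α β δ hδ
    have h1 : |∑ k, T α β (W k) - N * (∫ w, T α β w ∂(gaussianVec d))| ≤ N * (160 * ε) := by
      have : W ∉ bad (α, β) := fun h => hW (Set.mem_iUnion.2 ⟨_, h⟩)
      simp only [bad, Set.mem_setOf_eq, not_le] at this
      exact this.le
    have h2 : ∫ w, σ (dotp (fun i => X i α) w) * σ (dotp (fun i => X i β) w) ∂(gaussianVec d) =
        lam ^ 2 * ∫ w, T α β w ∂(gaussianVec d) := by
      simp only [T]
      rw [integral_div]
      field_simp
    rw [h2] at hδ
    set m := ∫ w, T α β w ∂(gaussianVec d)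
    set S := ∑ k, T α β (W k)
    have h3 : lam ^ 2 / N * S - δ = lam ^ 2 / N * (S - N * m) + (lam ^ 2 * m - δ) := by
      field_simp
      ring
    rw [h3]
    refine (abs_add_le _ _).trans ?_
    rw [abs_mul, abs_of_pos (by positivity : 0 < lam ^ 2 / N)]
    have h4 : lam ^ 2 / N * |S - N * m| ≤ lam ^ 2 / N * (N * (160 * ε)) := by gcongr
    have h5 : lam ^ 2 / N * (N * (160 * ε)) = 160 * lam ^ 2 * ε := by field_simp
    linarith
  rw [ge_iff_le]
  refine ENNReal.ofReal_le_of_le_toReal ?_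
  change _ ≤ (gaussianMat N d).real _
  refine le_trans (sub_le_sub_left hU 1) ?_
  rw [sub_le_iff_le_add]
  refine le_trans ?_ (measureReal_union_le _ _)
  refine (probReal_univ (μ := gaussianMat N d)).ge.trans ?_
  refine measureReal_mono ?_
  intro W _
  by_cases hW : W ∈ ⋃ p, bad p
  · exact Or.inr hW
  · left
    refine ⟨fun α => ?_, fun α β hαβ => ?_⟩
    · simp_rw [pow_two (((Real.sqrt N)⁻¹ • ((Matrix.of W * X).map σ)) _ _)]
      rw [hval]
      exact hfin W hW α α 1 (mean_diag H hε0 hε1 _ (hdiag α))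
    · rw [hval]
      have := hfin W hW α β 0 (by
        rw [sub_zero]
        exact mean_cross H hε0 hε1 _ _ (hdiag α) (hdiag β) (hoff α β hαβ))
      rwa [sub_zero] at this
end

section
/- Let X ∈ ℝ^{d×n} be deterministic and (ε,B)-orthonormal with ε < 1/λ_σ, let W ∈ ℝ^{ď×d} have i.i.d. N(0,1) entries, set X̌ = σ(WX)/√ď, and let Φ = E[X̌ᵀX̌] ∈ ℝ^{n×n}, where σ is twice differentiable with |σ'|,|σ''| ≤ λ_σ, E[σ(ξ)]=0, E[σ(ξ)²]=1 for ξ ~ N(0,1). Then there are universal constants C, c > 0 such that: (a) the operator norm satisfies ‖Φ‖ ≤ Cλ_σ²B²; and (b) with probability at least 1 − 2e^{−cn}, the operator norm satisfies ‖X̌‖ ≤ C(1 + √(n/ď))λ_σB. -/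
/-!
Lemma (operator norm bounds): `‖Φ‖ ≤ Cλ_σ²B²`, and with probability at least
`1 − 2e^{−cn}`, `‖X̌‖ ≤ C(1 + √(n/ď))λ_σB`.
-/

open MeasureTheory ProbabilityTheory Filter Topology Matrix

lemma gv_eq (d : ℕ) : gaussianVec d =
    (ProbabilityTheory.stdGaussian (EuclideanSpace ℝ (Fin d))).map
      (PiLp.continuousLinearEquiv 2 ℝ (fun _ : Fin d => ℝ)) := by
  rw [← map_pi_eq_stdGaussian, Measure.map_map (by fun_prop) (by fun_prop)]
  have : (⇑(PiLp.continuousLinearEquiv 2 ℝ (fun _ : Fin d => ℝ)) ∘ WithLp.toLp 2) = id := by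
    ext; simp
  rw [this, Measure.map_id]

instance gv_gauss (d : ℕ) : IsGaussian (gaussianVec d) := by
  rw [gv_eq]; infer_instance

lemma gv_lin (d : ℕ) (a : Fin d → ℝ) :
    (gaussianVec d).map (fun w => ∑ j, w j * a j) = gaussianReal 0 (∑ j, a j ^ 2).toNNReal := by
  have h1 : (fun w : Fin d → ℝ => ∑ j, w j * a j) =
      (innerSL ℝ (WithLp.toLp 2 a : EuclideanSpace ℝ (Fin d))) ∘ WithLp.toLp 2 := by
    ext w; simp [PiLp.inner_apply]
  rw [h1, ← Measure.map_map (by fun_prop) (by fun_prop), map_pi_eq_stdGaussian,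
    IsGaussian.map_eq_gaussianReal, integral_strongDual_stdGaussian, variance_dual_stdGaussian]
  simp [EuclideanSpace.real_norm_sq_eq]

lemma gv_mean (d : ℕ) (L : StrongDual ℝ (Fin d → ℝ)) : (gaussianVec d)[L] = 0 := by
  rw [gv_eq, integral_map (by fun_prop) (by fun_prop)]
  exact integral_strongDual_stdGaussian
    (L.comp (PiLp.continuousLinearEquiv 2 ℝ (fun _ : Fin d => ℝ)).toContinuousLinearMap)

lemma gv_rot (d : ℕ) (θ : ℝ) : ((gaussianVec d).prod (gaussianVec d)).map
    (ContinuousLinearMap.rotation θ) = (gaussianVec d).prod (gaussianVec d) :=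
  IsGaussian.map_rotation_eq_self_of_forall_strongDual_eq_zero (gv_mean d) θ

lemma gv_mgf (d : ℕ) (a : Fin d → ℝ) (s : ℝ) :
    ∫⁻ w, ENNReal.ofReal (Real.exp (s * ∑ j, w j * a j)) ∂(gaussianVec d) =
      ENNReal.ofReal (Real.exp ((∑ j, a j ^ 2) * s ^ 2 / 2)) := by
  have hm : Measurable (fun w : Fin d → ℝ => ∑ j, w j * a j) := by fun_prop
  have h := lintegral_map (μ := gaussianVec d) (f := fun x : ℝ => ENNReal.ofReal (Real.exp (s * x)))
    (by fun_prop) hm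
  rw [← h, gv_lin, ← ofReal_integral_eq_lintegral_ofReal (integrable_exp_mul_gaussianReal s)
    (ae_of_all _ fun x => (Real.exp_pos _).le)]
  have := mgf_gaussianReal (p := gaussianReal 0 (∑ j, a j ^ 2).toNNReal) (X := id) Measure.map_id s
  simp only [mgf, id] at this
  rw [this, Real.coe_toNNReal _ (Finset.sum_nonneg fun _ _ => sq_nonneg _)]
  simp

lemma jensen01 (h : ℝ → ℝ) (hc : Continuous h) :
    ENNReal.ofReal (Real.exp (∫ t in (0:ℝ)..1, h t)) ≤
      ∫⁻ t in Set.Ioc (0:ℝ) 1, ENNReal.ofReal (Real.exp (h t)) := by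
  have : IsProbabilityMeasure (volume.restrict (Set.Ioc (0:ℝ) 1)) := ⟨by simp⟩
  have i1 : IntegrableOn h (Set.Ioc (0:ℝ) 1) :=
    (hc.integrableOn_Icc).mono_set Set.Ioc_subset_Icc_self
  have i2 : IntegrableOn (fun t => Real.exp (h t)) (Set.Ioc (0:ℝ) 1) :=
    ((Real.continuous_exp.comp hc).integrableOn_Icc).mono_set Set.Ioc_subset_Icc_self
  have := convexOn_exp.map_integral_le (μ := volume.restrict (Set.Ioc (0:ℝ) 1)) (f := h)
    Real.continuous_exp.continuousOn isClosed_univ (by simp) i1 i2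
  rw [← ofReal_integral_eq_lintegral_ofReal i2 (ae_of_all _ fun x => (Real.exp_pos _).le),
    intervalIntegral.integral_of_le zero_le_one]
  exact ENNReal.ofReal_le_ofReal this

lemma maurey_pisier (d : ℕ) (f : (Fin d → ℝ) → ℝ) (g : (Fin d → ℝ) → Fin d → ℝ) (L : ℝ)
    (hf : Continuous f) (hg : Continuous g)
    (hd : ∀ x y : Fin d → ℝ, ∀ θ : ℝ,
      HasDerivAt (fun θ : ℝ => f (Real.cos θ • x + Real.sin θ • y))
      (∑ j, (-Real.sin θ • x + Real.cos θ • y) j * g (Real.cos θ • x + Real.sin θ • y) j) θ)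
    (hL : ∀ w, ∑ j, g w j ^ 2 ≤ L ^ 2) (s : ℝ) :
    ∫⁻ x, ∫⁻ y, ENNReal.ofReal (Real.exp (s * (f y - f x))) ∂(gaussianVec d) ∂(gaussianVec d) ≤
      ENNReal.ofReal (Real.exp (5 / 4 * s ^ 2 * L ^ 2)) := by
  set μ := gaussianVec d
  let G : (Fin d → ℝ) × (Fin d → ℝ) → ℝ := fun p =>
    s * (Real.pi / 2) * ∑ j, p.2 j * g p.1 j
  have hG : Continuous G := by fun_prop
  let R : ℝ → (Fin d → ℝ) × (Fin d → ℝ) → (Fin d → ℝ) × (Fin d → ℝ) := fun θ p =>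
    (Real.cos θ • p.1 + Real.sin θ • p.2, -Real.sin θ • p.1 + Real.cos θ • p.2)
  have hR : ∀ θ, MeasurePreserving (R θ) (μ.prod μ) (μ.prod μ) := fun θ =>
    ⟨by fun_prop, by
      have := gv_rot d θ
      convert this using 2
      ext p <;> simp [R, ContinuousLinearMap.rotation_apply]⟩
  have hRc : Continuous (fun q : ((Fin d → ℝ) × (Fin d → ℝ)) × ℝ => R (Real.pi / 2 * q.2) q.1) := by
    fun_prop
  have hRp : ∀ p, Continuous fun t : ℝ => G (R (Real.pi / 2 * t) p) := by
    intro p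
    simp only [G, R]
    fun_prop
  have key : ∀ p : (Fin d → ℝ) × (Fin d → ℝ),
      s * (f p.2 - f p.1) = ∫ t in (0:ℝ)..1, G (R (Real.pi / 2 * t) p) := by
    intro p
    have h1 : ∀ t : ℝ, HasDerivAt
        (fun t : ℝ => s * f (Real.cos (Real.pi / 2 * t) • p.1 + Real.sin (Real.pi / 2 * t) • p.2))
        (G (R (Real.pi / 2 * t) p)) t := by
      intro t
      have h2 : HasDerivAt (fun t : ℝ => Real.pi / 2 * t) (Real.pi / 2) t := by
        simpa using (hasDerivAt_id t).const_mul (Real.pi / 2)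
      have h3 := ((hd p.1 p.2 (Real.pi / 2 * t)).comp t h2).const_mul s
      refine h3.congr_deriv ?_
      simp only [G, R]
      rw [mul_comm _ (Real.pi / 2), mul_assoc]
    rw [intervalIntegral.integral_eq_sub_of_hasDerivAt (fun t _ => h1 t)]
    · simp; ring
    · apply Continuous.intervalIntegrable
      exact hRp p
  have hmeas : Measurable (fun p => ENNReal.ofReal (Real.exp (G p))) := by
    have := hG.measurable
    fun_prop
  calc _ = ∫⁻ p, ENNReal.ofReal (Real.exp (s * (f p.2 - f p.1))) ∂(μ.prod μ) := by
        rw [lintegral_prod]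
        have := hf.measurable
        fun_prop
    _ ≤ ∫⁻ p, ∫⁻ t in Set.Ioc (0:ℝ) 1,
          ENNReal.ofReal (Real.exp (G (R (Real.pi / 2 * t) p))) ∂volume ∂(μ.prod μ) := by
        apply lintegral_mono
        intro p
        dsimp only
        rw [key]
        exact jensen01 _ (hRp p)
    _ = ∫⁻ t in Set.Ioc (0:ℝ) 1, ∫⁻ p,
          ENNReal.ofReal (Real.exp (G (R (Real.pi / 2 * t) p))) ∂(μ.prod μ) := by
        apply lintegral_lintegral_swap
        exact (hmeas.comp hRc.measurable).aemeasurable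
    _ = ∫⁻ t in Set.Ioc (0:ℝ) 1, ∫⁻ p, ENNReal.ofReal (Real.exp (G p)) ∂(μ.prod μ) := by
        congr 1; ext t
        exact (hR _).lintegral_comp hmeas
    _ = ∫⁻ p, ENNReal.ofReal (Real.exp (G p)) ∂(μ.prod μ) := by simp
    _ = ∫⁻ x, ∫⁻ y, ENNReal.ofReal (Real.exp (G (x, y))) ∂μ ∂μ :=
        lintegral_prod _ hmeas.aemeasurable
    _ ≤ ∫⁻ x, ENNReal.ofReal (Real.exp (5 / 4 * s ^ 2 * L ^ 2)) ∂μ := by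
        apply lintegral_mono
        intro x
        simp only [G, μ]
        rw [gv_mgf]
        apply ENNReal.ofReal_le_ofReal
        apply Real.exp_le_exp.2
        have h1 := hL x
        have h2 : Real.pi ^ 2 ≤ 10 := by
          have := Real.pi_lt_d2
          have := Real.pi_pos
          nlinarith
        have h3 : 0 ≤ ∑ j, g x j ^ 2 := Finset.sum_nonneg fun _ _ => sq_nonneg _
        calc (∑ j, g x j ^ 2) * (s * (Real.pi / 2)) ^ 2 / 2
            = (∑ j, g x j ^ 2) * (s ^ 2 * Real.pi ^ 2) / 8 := by ring
          _ ≤ L ^ 2 * (s ^ 2 * 10) / 8 := by gcongr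
          _ = _ := by ring
    _ = _ := by simp

/-- centred mgf bound -/
lemma mgf_bound (d : ℕ) (f : (Fin d → ℝ) → ℝ) (g : (Fin d → ℝ) → Fin d → ℝ) (L : ℝ)
    (hf : Continuous f) (hg : Continuous g)
    (hd : ∀ x y : Fin d → ℝ, ∀ θ : ℝ,
      HasDerivAt (fun θ : ℝ => f (Real.cos θ • x + Real.sin θ • y))
      (∑ j, (-Real.sin θ • x + Real.cos θ • y) j * g (Real.cos θ • x + Real.sin θ • y) j) θ)
    (hL : ∀ w, ∑ j, g w j ^ 2 ≤ L ^ 2) (hi : Integrable f (gaussianVec d)) (s : ℝ) :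
    ∫⁻ x, ENNReal.ofReal (Real.exp (s * (f x - ∫ y, f y ∂(gaussianVec d)))) ∂(gaussianVec d) ≤
      ENNReal.ofReal (Real.exp (5 / 4 * s ^ 2 * L ^ 2)) := by
  have hmp := maurey_pisier d f g L hf hg hd hL (-s)
  rw [show (-s) ^ 2 = s ^ 2 by ring] at hmp
  refine le_trans ?_ hmp
  apply lintegral_mono
  intro x
  dsimp only
  by_cases hI : Integrable (fun y => Real.exp (-s * (f y - f x))) (gaussianVec d)
  · rw [← ofReal_integral_eq_lintegral_ofReal hI (ae_of_all _ fun x => (Real.exp_pos _).le)]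
    apply ENNReal.ofReal_le_ofReal
    have := convexOn_exp.map_integral_le (μ := gaussianVec d) (f := fun y => -s * (f y - f x))
      Real.continuous_exp.continuousOn isClosed_univ (by simp)
      ((hi.sub (integrable_const _)).const_mul _) hI
    refine le_trans (le_of_eq ?_) this
    rw [integral_const_mul, integral_sub hi (integrable_const _)]
    simp
    ring
  · have : ∫⁻ y, ENNReal.ofReal (Real.exp (-s * (f y - f x))) ∂(gaussianVec d) = ⊤ := by
      by_contra h
      apply hI
      refine ⟨by have := hf.measurable; fun_prop, ?_⟩
      rw [hasFiniteIntegral_iff_ofReal (ae_of_all _ fun x => (Real.exp_pos _).le)]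
      exact lt_top_iff_ne_top.2 h
    rw [this]; exact le_top

lemma sq_le_exp (t : ℝ) : t ^ 2 ≤ 2 * (Real.exp t + Real.exp (-t) - 2) := by
  rcases le_total 0 t with h | h
  · have h1 := Real.quadratic_le_exp_of_nonneg h
    have h2 := Real.add_one_le_exp (-t)
    linarith
  · have h1 := Real.quadratic_le_exp_of_nonneg (neg_nonneg.2 h)
    have h2 := Real.add_one_le_exp t
    have h3 : (-t) ^ 2 = t ^ 2 := by ring
    linarith

lemma var_bound (d : ℕ) (f : (Fin d → ℝ) → ℝ) (g : (Fin d → ℝ) → Fin d → ℝ)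
    (hf : Continuous f) (hg : Continuous g)
    (hd : ∀ x y : Fin d → ℝ, ∀ θ : ℝ,
      HasDerivAt (fun θ : ℝ => f (Real.cos θ • x + Real.sin θ • y))
      (∑ j, (-Real.sin θ • x + Real.cos θ • y) j * g (Real.cos θ • x + Real.sin θ • y) j) θ)
    (L : ℝ) (hLp : 0 < L)
    (hL : ∀ w, ∑ j, g w j ^ 2 ≤ L ^ 2) (hi : Integrable f (gaussianVec d)) :
    Integrable (fun x => (f x - ∫ y, f y ∂(gaussianVec d)) ^ 2) (gaussianVec d) ∧ 
    ∫ x, (f x - ∫ y, f y ∂(gaussianVec d)) ^ 2 ∂(gaussianVec d) ≤ 16 * L ^ 2 := by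
  set m := ∫ y, f y ∂(gaussianVec d)
  have hfm := hf.measurable
  have I : ∀ s, Integrable (fun x => Real.exp (s * (f x - m))) (gaussianVec d) ∧
      ∫ x, Real.exp (s * (f x - m)) ∂(gaussianVec d) ≤ Real.exp (5 / 4 * s ^ 2 * L ^ 2) := by
    intro s
    have h := mgf_bound d f g L hf hg hd hL hi s
    have h1 : Integrable (fun x => Real.exp (s * (f x - m))) (gaussianVec d) := by
      refine ⟨by fun_prop, ?_⟩
      rw [hasFiniteIntegral_iff_ofReal (ae_of_all _ fun x => (Real.exp_pos _).le)]
      exact lt_of_le_of_lt h ENNReal.ofReal_lt_top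
    refine ⟨h1, ?_⟩
    rw [← ofReal_integral_eq_lintegral_ofReal h1 (ae_of_all _ fun x => (Real.exp_pos _).le)] at h
    exact (ENNReal.ofReal_le_ofReal_iff (Real.exp_pos _).le).1 h
  obtain ⟨i1, b1⟩ := I (1 / L)
  obtain ⟨i2, b2⟩ := I (-(1 / L))
  have hLL : 5 / 4 * (1 / L) ^ 2 * L ^ 2 = 5 / 4 := by field_simp
  have hLL2 : 5 / 4 * (-(1 / L)) ^ 2 * L ^ 2 = 5 / 4 := by field_simp
  rw [hLL] at b1
  rw [hLL2] at b2
  have pt : ∀ x, (f x - m) ^ 2 ≤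
      L ^ 2 * (2 * (Real.exp (1 / L * (f x - m)) + Real.exp (-(1 / L) * (f x - m)) - 2)) := by
    intro x
    have h := sq_le_exp (1 / L * (f x - m))
    have e : (f x - m) ^ 2 = L ^ 2 * (1 / L * (f x - m)) ^ 2 := by field_simp
    rw [e, neg_mul]
    exact mul_le_mul_of_nonneg_left h (sq_nonneg L)
  have iR : Integrable (fun x => L ^ 2 * (2 * (Real.exp (1 / L * (f x - m)) +
      Real.exp (-(1 / L) * (f x - m)) - 2))) (gaussianVec d) :=
    (((i1.add i2).sub (integrable_const _)).const_mul _).const_mul _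
  have iS : Integrable (fun x => (f x - m) ^ 2) (gaussianVec d) := by
    apply iR.mono' (by fun_prop)
    filter_upwards with x
    rw [Real.norm_of_nonneg (sq_nonneg _)]; exact pt x
  refine ⟨iS, (integral_mono iS iR pt).trans ?_⟩
  have e3 : ∫ x, (Real.exp (1 / L * (f x - m)) + Real.exp (-(1 / L) * (f x - m)) - 2)
      ∂(gaussianVec d) = (∫ x, Real.exp (1 / L * (f x - m)) ∂(gaussianVec d) +
        ∫ x, Real.exp (-(1 / L) * (f x - m)) ∂(gaussianVec d)) - 2 := by
    rw [← integral_add i1 i2]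
    have := integral_sub (i1.add i2) (integrable_const (2:ℝ))
    simpa using this
  rw [integral_const_mul, integral_const_mul, e3]
  have e4 : Real.exp (5 / 4) ≤ 5 := by
    have h1 := Real.exp_one_lt_d9
    have h2 : Real.exp (1 / 4) ≤ 4 / 3 := by
      have := Real.add_one_le_exp (-(1/4) : ℝ)
      rw [Real.exp_neg] at this
      have hp := Real.exp_pos (1/4)
      have h5 : (3/4 : ℝ) * Real.exp (1/4) ≤ 1 := by
        calc (3/4 : ℝ) * Real.exp (1/4) ≤ (Real.exp (1/4))⁻¹ * Real.exp (1/4) := by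
              apply mul_le_mul_of_nonneg_right _ hp.le; linarith
          _ = 1 := inv_mul_cancel₀ hp.ne'
      linarith
    rw [show (5/4 : ℝ) = 1 + 1/4 by norm_num, Real.exp_add]
    nlinarith [Real.exp_pos (1/4), Real.exp_pos 1]
  rw [mul_comm]
  apply mul_le_mul_of_nonneg_right _ (sq_nonneg L)
  linarith

lemma exists_net (m : ℕ) : ∃ N : Finset (EuclideanSpace ℝ (Fin m)), N.card ≤ 5 ^ m ∧
    (∀ u ∈ N, ‖u‖ ≤ 1) ∧ ∀ x : EuclideanSpace ℝ (Fin m), ‖x‖ ≤ 1 → ∃ u ∈ N, ‖x - u‖ ≤ 1 / 2 := by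
  classical
  let good : Finset (EuclideanSpace ℝ (Fin m)) → Prop := fun s =>
    (∀ c ∈ s, ‖c‖ ≤ 2) ∧ ∀ c ∈ s, ∀ d ∈ s, c ≠ d → 1 ≤ ‖c - d‖
  have hb : ∀ s, good s → s.card ≤ 5 ^ m := by
    intro s hs
    have := Besicovitch.card_le_of_separated s hs.1 hs.2
    simpa using this
  let S : Set ℕ := {k | ∃ s, good s ∧ s.card = k}
  have hS : S.Nonempty := ⟨0, ∅, ⟨by simp, by simp⟩, by simp⟩
  have hSb : BddAbove S := ⟨5 ^ m, by rintro k ⟨s, hs, rfl⟩; exact hb s hs⟩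
  obtain ⟨s, hs, hcard⟩ := Nat.sSup_mem hS hSb
  refine ⟨s.image (fun c => (1 / 2 : ℝ) • c), Finset.card_image_le.trans (hb s hs), ?_, ?_⟩
  · intro u hu
    obtain ⟨c, hc, rfl⟩ := Finset.mem_image.1 hu
    rw [norm_smul]
    have := hs.1 c hc
    norm_num
    linarith
  · intro x hx
    by_contra! hcon
    have hsep : ∀ c ∈ s, 1 ≤ ‖(2 : ℝ) • x - c‖ := by
      intro c hc
      have h1 := hcon ((1 / 2 : ℝ) • c) (Finset.mem_image_of_mem _ hc)
      have h2 : (2 : ℝ) • x - c = (2 : ℝ) • (x - (1 / 2 : ℝ) • c) := by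
        rw [smul_sub, smul_smul]; norm_num
      rw [h2, norm_smul]
      norm_num at h1 ⊢
      linarith
    have hnot : (2 : ℝ) • x ∉ s := by
      intro h
      have := hsep _ h
      simp at this
      linarith
    have hg : good (insert ((2 : ℝ) • x) s) := by
      constructor
      · intro c hc
        rcases Finset.mem_insert.1 hc with rfl | hc
        · rw [norm_smul]; norm_num; linarith
        · exact hs.1 c hc
      · intro c hc d hd hne
        rcases Finset.mem_insert.1 hc with rfl | hc
        · rcases Finset.mem_insert.1 hd with rfl | hd
          · exact absurd rfl hne
          · exact hsep d hd
        · rcases Finset.mem_insert.1 hd with rfl | hd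
          · rw [norm_sub_rev]; exact hsep c hc
          · exact hs.2 c hc d hd hne
    have : (insert ((2 : ℝ) • x) s).card ≤ sSup S := le_csSup hSb ⟨_, hg, rfl⟩
    rw [Finset.card_insert_of_notMem hnot] at this
    omega

lemma opNorm_le_of_net {m n : ℕ} (N : Finset (EuclideanSpace ℝ (Fin m)))
    (N' : Finset (EuclideanSpace ℝ (Fin n)))
    (hN : ∀ x : EuclideanSpace ℝ (Fin m), ‖x‖ ≤ 1 → ∃ u ∈ N, ‖x - u‖ ≤ 1 / 2)
    (hN' : ∀ x : EuclideanSpace ℝ (Fin n), ‖x‖ ≤ 1 → ∃ u ∈ N', ‖x - u‖ ≤ 1 / 2)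
    (A : Matrix (Fin m) (Fin n) ℝ) (K : ℝ)
    (h : ∀ u ∈ N, ∀ v ∈ N', ∑ i, u i * ∑ j, A i j * v j ≤ K) : opNorm A ≤ 4 * K := by
  unfold opNorm
  set T := LinearMap.toContinuousLinearMap (Matrix.toEuclideanLin A) with hT
  have hTa : ∀ (u : EuclideanSpace ℝ (Fin m)) (v : EuclideanSpace ℝ (Fin n)), inner ℝ u (T v) = ∑ i, u i * ∑ j, A i j * v j := by
    intro u v
    simp [hT, PiLp.inner_apply, Matrix.toLpLin_apply, Matrix.mulVec, dotProduct, mul_comm]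
  have key : ∀ (y : EuclideanSpace ℝ (Fin m)), (∀ u ∈ N, inner ℝ u y ≤ K) → ‖y‖ ≤ 2 * K := by
    intro y hy
    obtain ⟨u, hu, hxu⟩ := hN (‖y‖⁻¹ • y) (by
      rw [norm_smul, norm_inv, norm_norm]; exact inv_mul_le_one)
    have h1 := hy u hu
    have h2 : inner ℝ (‖y‖⁻¹ • y) y = ‖y‖ := by
      rw [real_inner_smul_left, real_inner_self_eq_norm_sq]
      by_cases h0 : ‖y‖ = 0
      · simp [h0]
      · field_simp
    have h3 : inner ℝ (‖y‖⁻¹ • y - u) y ≤ 1 / 2 * ‖y‖ :=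
      (real_inner_le_norm _ _).trans (mul_le_mul_of_nonneg_right hxu (norm_nonneg _))
    rw [inner_sub_left, h2] at h3
    linarith
  have hv : ∀ v ∈ N', ‖T v‖ ≤ 2 * K := fun v hv => key _ fun u hu => by
    rw [hTa]; exact h u hu v hv
  have hx : ∀ x : EuclideanSpace ℝ (Fin n), ‖x‖ ≤ 1 → ‖T x‖ ≤ 2 * K + ‖T‖ / 2 := by
    intro x hx
    obtain ⟨v, hvN, hxv⟩ := hN' x hx
    have : T x = T v + T (x - v) := by rw [map_sub]; abel
    rw [this]
    refine (norm_add_le _ _).trans (add_le_add (hv v hvN) ?_)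
    refine (T.le_opNorm _).trans ?_
    nlinarith [norm_nonneg T]
  have h0 : 0 ≤ 2 * K + ‖T‖ / 2 := (norm_nonneg _).trans (hx 0 (by simp))
  have : ‖T‖ ≤ 2 * K + ‖T‖ / 2 := T.opNorm_le_of_unit_norm h0 fun x hx1 => hx x hx1.le
  linarith

lemma opNorm_sq_bound {d n : ℕ} (X : Matrix (Fin d) (Fin n) ℝ) (B : ℝ) (h : opNorm X ≤ B)
    (v : Fin n → ℝ) : ∑ j, (∑ α, X j α * v α) ^ 2 ≤ B ^ 2 * ∑ α, v α ^ 2 := by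
  have h1 := (LinearMap.toContinuousLinearMap (Matrix.toEuclideanLin X)).le_of_opNorm_le h
    (WithLp.toLp 2 v)
  have h2 := pow_le_pow_left₀ (norm_nonneg _) h1 2
  rw [mul_pow, EuclideanSpace.real_norm_sq_eq, EuclideanSpace.real_norm_sq_eq] at h2
  simpa [Matrix.toLpLin_apply, Matrix.mulVec, dotProduct] using h2

/-- linear combination of the features -/
noncomputable def fv {d n : ℕ} (σ : ℝ → ℝ) (X : Matrix (Fin d) (Fin n) ℝ) (v : Fin n → ℝ)
    (w : Fin d → ℝ) : ℝ := ∑ α, v α * σ (∑ j, w j * X j α)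

lemma sig_lip (σ σ' : ℝ → ℝ) (l : ℝ) (h : ∀ x, HasDerivAt σ (σ' x) x) (hb : ∀ x, |σ' x| ≤ l)
    (x y : ℝ) : |σ x - σ y| ≤ l * |x - y| := by
  have := convex_univ.norm_image_sub_le_of_norm_hasDerivWithin_le (f := σ) (f' := σ') (C := l)
    (fun x _ => (h x).hasDerivWithinAt) (fun x _ => hb x) (Set.mem_univ y) (Set.mem_univ x)
  simpa using this

lemma sig_memLp (σ σ' : ℝ → ℝ) (l : ℝ) (h : ∀ x, HasDerivAt σ (σ' x) x) (hb : ∀ x, |σ' x| ≤ l)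
    (v : NNReal) : MemLp σ 2 (gaussianReal 0 v) := by
  have hc : Continuous σ := continuous_iff_continuousAt.2 fun x => (h x).continuousAt
  have h1 : MemLp (fun x : ℝ => |σ 0| + l * |x|) 2 (gaussianReal 0 v) := by
    have a0 : MemLp (fun x : ℝ => x) 2 (gaussianReal 0 v) := memLp_id_gaussianReal 2
    have a1 : MemLp (fun _ : ℝ => |σ 0|) 2 (gaussianReal 0 v) := memLp_const _
    have a2 : MemLp (fun x : ℝ => l * |x|) 2 (gaussianReal 0 v) := a0.abs.const_mul l
    exact a1.add a2
  refine h1.mono hc.aestronglyMeasurable (ae_of_all _ fun x => ?_)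
  have h2 := sig_lip σ σ' l h hb x 0
  have h3 := abs_sub_abs_le_abs_sub (σ x) (σ 0)
  rw [sub_zero] at h2
  simp only [Real.norm_eq_abs]
  refine le_trans ?_ (le_abs_self _)
  linarith

lemma feat_memLp {d : ℕ} (σ σ' : ℝ → ℝ) (l : ℝ) (h : ∀ x, HasDerivAt σ (σ' x) x)
    (hb : ∀ x, |σ' x| ≤ l) (a : Fin d → ℝ) :
    MemLp (fun w => σ (∑ j, w j * a j)) 2 (gaussianVec d) := by
  have h1 := sig_memLp σ σ' l h hb (∑ j, a j ^ 2).toNNReal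
  rw [← gv_lin] at h1
  have hm : Measurable (fun w : Fin d → ℝ => ∑ j, w j * a j) := by fun_prop
  exact h1.comp_of_map hm.aemeasurable

lemma feat_mean {d : ℕ} (σ σ' : ℝ → ℝ) (l : ℝ) (h : ∀ x, HasDerivAt σ (σ' x) x)
    (hb : ∀ x, |σ' x| ≤ l) (h0 : ∫ x, σ x ∂(gaussianReal 0 1) = 0) (a : Fin d → ℝ) :
    |∫ w, σ (∑ j, w j * a j) ∂(gaussianVec d)| ≤ l * |∑ j, a j ^ 2 - 1| := by
  have hc : Continuous σ := continuous_iff_continuousAt.2 fun x => (h x).continuousAt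
  have hl : 0 ≤ l := (abs_nonneg _).trans (hb 0)
  set q := ∑ j, a j ^ 2 with hq
  have hq0 : 0 ≤ q := Finset.sum_nonneg fun _ _ => sq_nonneg _
  set r := Real.sqrt q with hr
  have hr2 : r ^ 2 = q := Real.sq_sqrt hq0
  have hr0 : 0 ≤ r := Real.sqrt_nonneg _
  have hg : gaussianReal 0 q.toNNReal = (gaussianReal 0 1).map (fun x => r * x) := by
    rw [gaussianReal_map_const_mul]
    congr 1
    · simp
    · ext; simp [hr2, hq0]
  have h1 : ∫ w, σ (∑ j, w j * a j) ∂(gaussianVec d) = ∫ x, σ (r * x) ∂(gaussianReal 0 1) := by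
    have hm : Measurable (fun w : Fin d → ℝ => ∑ j, w j * a j) := by fun_prop
    have e1 := integral_map (μ := gaussianVec d) (φ := fun w : Fin d → ℝ => ∑ j, w j * a j)
      (f := σ) hm.aemeasurable hc.aestronglyMeasurable
    rw [← e1, gv_lin, ← hq, hg, integral_map (by fun_prop) hc.aestronglyMeasurable]
  have i1 : Integrable σ (gaussianReal 0 1) :=
    (sig_memLp σ σ' l h hb 1).integrable (by norm_num)
  have i2 : Integrable (fun x => σ (r * x)) (gaussianReal 0 1) := by
    have := (sig_memLp σ σ' l h hb q.toNNReal).integrable (by norm_num)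
    rw [hg] at this
    exact this.comp_measurable (by fun_prop)
  have iabs : Integrable (fun x : ℝ => |x|) (gaussianReal 0 1) :=
    ((memLp_id_gaussianReal 1).integrable (by norm_num)).abs
  have isq : Integrable (fun x : ℝ => x ^ 2) (gaussianReal 0 1) :=
    (memLp_id_gaussianReal 2).integrable_sq
  have hsq : ∫ x, x ^ 2 ∂(gaussianReal 0 1) = 1 := by
    have := variance_fun_id_gaussianReal (μ := 0) (v := 1)
    rw [variance_eq_integral (by fun_prop)] at this
    simpa using this
  have habs : ∫ x, |x| ∂(gaussianReal 0 1) ≤ 1 := by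
    have : ∫ x, |x| ∂(gaussianReal 0 1) ≤ ∫ x, (1 + x ^ 2) / 2 ∂(gaussianReal 0 1) := by
      apply integral_mono iabs (((integrable_const _).add isq).div_const _)
      intro x
      dsimp
      nlinarith [sq_nonneg (|x| - 1), sq_abs x]
    rw [integral_div, integral_add (integrable_const _) isq, hsq] at this
    simpa using this
  calc _ = |∫ x, (σ (r * x) - σ x) ∂(gaussianReal 0 1)| := by
        rw [h1, integral_sub i2 i1, h0, sub_zero]
    _ ≤ ∫ x, |σ (r * x) - σ x| ∂(gaussianReal 0 1) := abs_integral_le_integral_abs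
    _ ≤ ∫ x, (l * |r - 1|) * |x| ∂(gaussianReal 0 1) := by
        apply integral_mono (i2.sub i1).abs (iabs.const_mul _)
        intro x
        have := sig_lip σ σ' l h hb (r * x) x
        rw [show r * x - x = (r - 1) * x by ring, abs_mul, ← mul_assoc] at this
        exact this
    _ ≤ l * |r - 1| * 1 := by
        rw [integral_const_mul]
        exact mul_le_mul_of_nonneg_left habs (by positivity)
    _ ≤ l * |q - 1| := by
        rw [mul_one, ← hr2, show r ^ 2 - 1 = (r - 1) * (r + 1) by ring, abs_mul]
        apply mul_le_mul_of_nonneg_left _ hl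
        rw [abs_of_nonneg (by linarith : 0 ≤ r + 1)]
        nlinarith [abs_nonneg (r - 1)]

lemma fv_props {d n : ℕ} (X : Matrix (Fin d) (Fin n) ℝ) (B l : ℝ) (σ σ' : ℝ → ℝ)
    (h : ∀ x, HasDerivAt σ (σ' x) x) (hc' : Continuous σ') (hb : ∀ x, |σ' x| ≤ l)
    (h0 : ∫ x, σ x ∂(gaussianReal 0 1) = 0) (hX : opNorm X ≤ B)
    (hX2 : ∑ α : Fin n, ((∑ i, X i α ^ 2) - 1) ^ 2 ≤ B ^ 2) (hL : 0 < l * B)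
    (v : Fin n → ℝ) (hv : ∑ α, v α ^ 2 ≤ 1) :
    Continuous (fv σ X v) ∧ MemLp (fv σ X v) 2 (gaussianVec d) ∧
    |∫ w, fv σ X v w ∂(gaussianVec d)| ≤ l * B ∧
    (∀ s : ℝ, ∫⁻ x, ENNReal.ofReal (Real.exp (s * (fv σ X v x - ∫ y, fv σ X v y ∂(gaussianVec d))))
      ∂(gaussianVec d) ≤ ENNReal.ofReal (Real.exp (5 / 4 * s ^ 2 * (l * B) ^ 2))) ∧
    ∫ w, fv σ X v w ^ 2 ∂(gaussianVec d) ≤ 34 * (l * B) ^ 2 := by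
  have hc : Continuous σ := continuous_iff_continuousAt.2 fun x => (h x).continuousAt
  have hl : 0 ≤ l := (abs_nonneg _).trans (hb 0)
  have hfc : Continuous (fv σ X v) := by unfold fv; fun_prop
  let g : (Fin d → ℝ) → Fin d → ℝ := fun w j =>
    ∑ α, X j α * (v α * σ' (∑ k, w k * X k α))
  have hgc : Continuous g := by fun_prop
  have hd : ∀ x y : Fin d → ℝ, ∀ θ : ℝ,
      HasDerivAt (fun θ : ℝ => fv σ X v (Real.cos θ • x + Real.sin θ • y))
      (∑ j, (-Real.sin θ • x + Real.cos θ • y) j * g (Real.cos θ • x + Real.sin θ • y) j) θ := by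
    intro x y θ
    have e : ∀ α, HasDerivAt (fun θ : ℝ => ∑ j, (Real.cos θ • x + Real.sin θ • y) j * X j α)
        (∑ j, (-Real.sin θ • x + Real.cos θ • y) j * X j α) θ := by
      intro α
      apply HasDerivAt.fun_sum
      intro j _
      apply HasDerivAt.mul_const
      simp only [Pi.add_apply, Pi.smul_apply, smul_eq_mul]
      exact ((Real.hasDerivAt_cos θ).mul_const _).add ((Real.hasDerivAt_sin θ).mul_const _)
    have e2 : HasDerivAt (fun θ : ℝ => fv σ X v (Real.cos θ • x + Real.sin θ • y))
        (∑ α, v α * (σ' (∑ j, (Real.cos θ • x + Real.sin θ • y) j * X j α) *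
          (∑ j, (-Real.sin θ • x + Real.cos θ • y) j * X j α))) θ := by
      unfold fv
      apply HasDerivAt.fun_sum
      intro α _
      exact ((h _).comp θ (e α)).const_mul (v α)
    refine e2.congr_deriv ?_
    simp only [g, Finset.mul_sum]
    rw [Finset.sum_comm]
    refine Finset.sum_congr rfl fun j _ => Finset.sum_congr rfl fun α _ => ?_
    ring
  have hgL : ∀ w, ∑ j, g w j ^ 2 ≤ (l * B) ^ 2 := by
    intro w
    refine (opNorm_sq_bound X B hX _).trans ?_
    have : ∑ α, (v α * σ' (∑ k, w k * X k α)) ^ 2 ≤ l ^ 2 := by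
      calc _ ≤ ∑ α, v α ^ 2 * l ^ 2 := by
            apply Finset.sum_le_sum
            intro α _
            rw [mul_pow]
            apply mul_le_mul_of_nonneg_left _ (sq_nonneg _)
            exact sq_le_sq' (abs_le.1 (hb _)).1 (abs_le.1 (hb _)).2
        _ = (∑ α, v α ^ 2) * l ^ 2 := by rw [Finset.sum_mul]
        _ ≤ 1 * l ^ 2 := mul_le_mul_of_nonneg_right hv (sq_nonneg _)
        _ = l ^ 2 := one_mul _
    calc _ ≤ B ^ 2 * l ^ 2 := mul_le_mul_of_nonneg_left this (sq_nonneg _)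
      _ = _ := by ring
  have hMa : ∀ α, MemLp (fun w : Fin d → ℝ => v α * σ (∑ j, w j * X j α)) 2 (gaussianVec d) :=
    fun α => (feat_memLp σ σ' l h hb (fun j => X j α)).const_mul _
  have hM : MemLp (fv σ X v) 2 (gaussianVec d) := by
    unfold fv
    exact memLp_finsetSum _ fun α _ => hMa α
  have hi : Integrable (fv σ X v) (gaussianVec d) := hM.integrable (by norm_num)
  have hm : |∫ w, fv σ X v w ∂(gaussianVec d)| ≤ l * B := by
    unfold fv
    rw [integral_finsetSum _ fun α _ => (hMa α).integrable (by norm_num)]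
    simp_rw [integral_const_mul]
    apply abs_le_of_sq_le_sq _ hL.le
    refine (Finset.sum_mul_sq_le_sq_mul_sq _ _ _).trans ?_
    have : ∑ α, (∫ w, σ (∑ j, w j * X j α) ∂(gaussianVec d)) ^ 2 ≤ l ^ 2 * B ^ 2 := by
      calc _ ≤ ∑ α, l ^ 2 * ((∑ i, X i α ^ 2) - 1) ^ 2 := by
            apply Finset.sum_le_sum
            intro α _
            have := feat_mean σ σ' l h hb h0 (fun j => X j α)
            have := pow_le_pow_left₀ (abs_nonneg _) this 2
            rwa [mul_pow, sq_abs, sq_abs] at this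
        _ = l ^ 2 * ∑ α : Fin n, ((∑ i, X i α ^ 2) - 1) ^ 2 := by rw [Finset.mul_sum]
        _ ≤ _ := mul_le_mul_of_nonneg_left hX2 (sq_nonneg _)
    calc _ ≤ 1 * (l ^ 2 * B ^ 2) := mul_le_mul hv this
            (Finset.sum_nonneg fun _ _ => sq_nonneg _) zero_le_one
      _ = _ := by ring
  refine ⟨hfc, hM, hm, fun s => mgf_bound d _ g (l * B) hfc hgc hd hgL hi s, ?_⟩
  obtain ⟨i1, b1⟩ := var_bound d _ g hfc hgc hd (l * B) hL hgL hi
  set m := ∫ w, fv σ X v w ∂(gaussianVec d)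
  have hm2 : m ^ 2 ≤ (l * B) ^ 2 := sq_le_sq' (abs_le.1 hm).1 (abs_le.1 hm).2
  calc ∫ w, fv σ X v w ^ 2 ∂(gaussianVec d)
      ≤ ∫ w, (2 * (fv σ X v w - m) ^ 2 + 2 * m ^ 2) ∂(gaussianVec d) := by
        apply integral_mono hM.integrable_sq ((i1.const_mul 2).add (integrable_const _))
        intro w
        dsimp
        nlinarith [sq_nonneg (fv σ X v w - 2 * m)]
    _ = 2 * ∫ w, (fv σ X v w - m) ^ 2 ∂(gaussianVec d) + 2 * m ^ 2 := by
        rw [integral_add (i1.const_mul 2) (integrable_const _), integral_const_mul]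
        simp
    _ ≤ _ := by linarith

lemma tail_bound {d n dc : ℕ} (f : (Fin d → ℝ) → ℝ) (L m : ℝ) (hL : 0 < L) (hf : Continuous f)
    (hm : |m| ≤ L)
    (hmgf : ∀ s : ℝ, ∫⁻ x, ENNReal.ofReal (Real.exp (s * (f x - m))) ∂(gaussianVec d) ≤
      ENNReal.ofReal (Real.exp (5 / 4 * s ^ 2 * L ^ 2)))
    (u : Fin dc → ℝ) (hu : ∑ i, u i ^ 2 ≤ 1) :
    gaussianMat dc d {W | 6 * (Real.sqrt dc + Real.sqrt n) * L < ∑ i, u i * f (W i)} ≤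
      ENNReal.ofReal (Real.exp (-3 * (dc + n))) := by
  set τ := Real.sqrt dc + Real.sqrt n with hτ
  have hτ0 : 0 ≤ τ := by positivity
  have hd0 : 0 ≤ Real.sqrt dc := Real.sqrt_nonneg _
  have hn0 : 0 ≤ Real.sqrt n := Real.sqrt_nonneg _
  have hτ2 : (dc + n : ℝ) ≤ τ ^ 2 := by
    have h1 := Real.sq_sqrt (Nat.cast_nonneg (α := ℝ) dc)
    have h2 := Real.sq_sqrt (Nat.cast_nonneg (α := ℝ) n)
    have : 0 ≤ Real.sqrt dc * Real.sqrt n := by positivity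
    nlinarith
  set s := τ / L with hs
  have hs0 : 0 ≤ s := by positivity
  have hfm := hf.measurable
  let H : Fin dc → (Fin d → ℝ) → ℝ := fun i x => Real.exp (s * u i * (f x - m))
  have hHi : ∀ i, Integrable (H i) (gaussianVec d) := by
    intro i
    refine ⟨by fun_prop, ?_⟩
    rw [hasFiniteIntegral_iff_ofReal (ae_of_all _ fun x => (Real.exp_pos _).le)]
    exact lt_of_le_of_lt (hmgf _) ENNReal.ofReal_lt_top
  have hHb : ∀ i, ∫ x, H i x ∂(gaussianVec d) ≤ Real.exp (5 / 4 * (s * u i) ^ 2 * L ^ 2) := by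
    intro i
    have h := hmgf (s * u i)
    rw [← ofReal_integral_eq_lintegral_ofReal (hHi i)
      (ae_of_all _ fun x => (Real.exp_pos _).le)] at h
    exact (ENNReal.ofReal_le_ofReal_iff (Real.exp_pos _).le).1 h
  have hPi : Integrable (fun W : Fin dc → Fin d → ℝ => ∏ i, H i (W i)) (gaussianMat dc d) :=
    Integrable.fintype_prod hHi
  have hP0 : ∀ W : Fin dc → Fin d → ℝ, 0 ≤ ∏ i, H i (W i) :=
    fun W => Finset.prod_nonneg fun i _ => (Real.exp_pos _).le
  have hPb : ∫⁻ W, ENNReal.ofReal (∏ i, H i (W i)) ∂(gaussianMat dc d) ≤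
      ENNReal.ofReal (Real.exp (5 / 4 * τ ^ 2)) := by
    rw [← ofReal_integral_eq_lintegral_ofReal hPi (ae_of_all _ hP0),
      integral_fintype_prod_eq_prod]
    apply ENNReal.ofReal_le_ofReal
    calc _ ≤ ∏ i, Real.exp (5 / 4 * (s * u i) ^ 2 * L ^ 2) :=
          Finset.prod_le_prod (fun i _ => integral_nonneg fun x => (Real.exp_pos _).le)
            (fun i _ => hHb i)
      _ = Real.exp (5 / 4 * τ ^ 2 * ∑ i, u i ^ 2) := by
          rw [← Real.exp_sum, Finset.mul_sum]
          congr 1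
          refine Finset.sum_congr rfl fun i _ => ?_
          rw [hs]; field_simp
      _ ≤ _ := by
          apply Real.exp_le_exp.2
          nlinarith [sq_nonneg τ]
  have hsum : |∑ i, u i| ≤ Real.sqrt dc := by
    apply Real.abs_le_sqrt
    have h1 := Finset.sum_mul_sq_le_sq_mul_sq Finset.univ u (fun _ => (1:ℝ))
    simp at h1
    nlinarith [Nat.cast_nonneg (α := ℝ) dc]
  have hsub : {W : Fin dc → Fin d → ℝ | 6 * τ * L < ∑ i, u i * f (W i)} ⊆
      {W | ENNReal.ofReal (Real.exp (5 * τ ^ 2)) ≤ ENNReal.ofReal (∏ i, H i (W i))} := by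
    intro W hW
    simp only [Set.mem_ofPred_eq] at hW ⊢
    apply ENNReal.ofReal_le_ofReal
    simp only [H]
    rw [← Real.exp_sum]
    apply Real.exp_le_exp.2
    have e1 : ∑ i, s * u i * (f (W i) - m) = s * (∑ i, u i * f (W i)) - s * (m * ∑ i, u i) := by
      rw [Finset.mul_sum, Finset.mul_sum, Finset.mul_sum, ← Finset.sum_sub_distrib]
      refine Finset.sum_congr rfl fun i _ => ?_
      ring
    rw [e1]
    have e2 : m * ∑ i, u i ≤ L * τ := by
      calc m * ∑ i, u i ≤ |m * ∑ i, u i| := le_abs_self _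
        _ = |m| * |∑ i, u i| := abs_mul _ _
        _ ≤ L * τ := mul_le_mul hm (by linarith) (abs_nonneg _) hL.le
    have e3 : s * (m * ∑ i, u i) ≤ s * (L * τ) := mul_le_mul_of_nonneg_left e2 hs0
    have e4 : s * (6 * τ * L) ≤ s * (∑ i, u i * f (W i)) := mul_le_mul_of_nonneg_left hW.le hs0
    have e5 : s * (L * τ) = τ ^ 2 := by rw [hs]; field_simp
    have e6 : s * (6 * τ * L) = 6 * τ ^ 2 := by rw [hs]; field_simp
    linarith
  refine (measure_mono hsub).trans ?_
  have hmk := mul_meas_ge_le_lintegral₀ (μ := gaussianMat dc d)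
    (f := fun W => ENNReal.ofReal (∏ i, H i (W i)))
    hPi.aestronglyMeasurable.aemeasurable.ennreal_ofReal (ENNReal.ofReal (Real.exp (5 * τ ^ 2)))
  have hpos : ENNReal.ofReal (Real.exp (5 * τ ^ 2)) ≠ 0 := by
    simp [Real.exp_pos]
  have h2 := hmk.trans hPb
  rw [mul_comm] at h2
  rw [← ENNReal.le_div_iff_mul_le (Or.inl hpos) (Or.inl ENNReal.ofReal_ne_top)] at h2
  refine h2.trans ?_
  rw [← ENNReal.ofReal_div_of_pos (Real.exp_pos _), ← Real.exp_sub]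
  apply ENNReal.ofReal_le_ofReal
  apply Real.exp_le_exp.2
  nlinarith

lemma fv_mul_integrable {d n dc : ℕ} (f g : (Fin d → ℝ) → ℝ)
    (hf : MemLp f 2 (gaussianVec d)) (hg : MemLp g 2 (gaussianVec d)) (i : Fin dc) :
    Integrable (fun W : Fin dc → Fin d → ℝ => f (W i) * g (W i)) (gaussianMat dc d) := by
  have := hf.integrable_mul hg
  exact (measurePreserving_eval (fun _ : Fin dc => gaussianVec d) i).integrable_comp_of_integrable
    this

lemma eval_integral {d dc : ℕ} (f : (Fin d → ℝ) → ℝ) (hf : Integrable f (gaussianVec d))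
    (i : Fin dc) :
    ∫ W : Fin dc → Fin d → ℝ, f (W i) ∂(gaussianMat dc d) = ∫ w, f w ∂(gaussianVec d) := by
  have mp := measurePreserving_eval (fun _ : Fin dc => gaussianVec d) i
  have e := integral_map (μ := gaussianMat dc d) (φ := fun W => W i) (f := f)
    mp.measurable.aemeasurable (by rw [mp.map_eq]; exact hf.aestronglyMeasurable)
  rw [← e, mp.map_eq]

lemma norm_sq_le_one {m : ℕ} (u : EuclideanSpace ℝ (Fin m)) (h : ‖u‖ ≤ 1) : ∑ i, u i ^ 2 ≤ 1 := by
  rw [← EuclideanSpace.real_norm_sq_eq]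
  exact pow_le_one₀ (norm_nonneg _) h

lemma part_a {d n dc : ℕ} (X : Matrix (Fin d) (Fin n) ℝ) (B l : ℝ) (σ σ' : ℝ → ℝ)
    (h : ∀ x, HasDerivAt σ (σ' x) x) (hc' : Continuous σ') (hb : ∀ x, |σ' x| ≤ l)
    (h0 : ∫ x, σ x ∂(gaussianReal 0 1) = 0) (hX : opNorm X ≤ B)
    (hX2 : ∑ α : Fin n, ((∑ i, X i α ^ 2) - 1) ^ 2 ≤ B ^ 2) (hL : 0 < l * B) :
    opNorm (Matrix.of fun α β : Fin n =>
              ∫ W, (((Real.sqrt dc)⁻¹ • ((Matrix.of W * X).map σ))ᵀ *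
                  ((Real.sqrt dc)⁻¹ • ((Matrix.of W * X).map σ))) α β ∂gaussianMat dc d) ≤
          136 * l ^ 2 * B ^ 2 := by
  obtain ⟨N, -, hN1, hN⟩ := exists_net n
  rw [show 136 * l ^ 2 * B ^ 2 = 4 * (34 * (l * B) ^ 2) by ring]
  apply opNorm_le_of_net N N hN hN
  intro u hu v hv
  set r := (Real.sqrt dc)⁻¹ with hr
  have hM : ∀ α, MemLp (fun w : Fin d → ℝ => σ (∑ j, w j * X j α)) 2 (gaussianVec d) :=
    fun α => feat_memLp σ σ' l h hb (fun j => X j α)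
  obtain ⟨-, hMu, -, -, bu⟩ := fv_props X B l σ σ' h hc' hb h0 hX hX2 hL u
    (norm_sq_le_one u (hN1 u hu))
  obtain ⟨-, hMv, -, -, bv⟩ := fv_props X B l σ σ' h hc' hb h0 hX hX2 hL v
    (norm_sq_le_one v (hN1 v hv))
  have ent : ∀ α β, ∫ W, ((r • ((Matrix.of W * X).map σ))ᵀ *
      (r • ((Matrix.of W * X).map σ))) α β ∂gaussianMat dc d =
      r ^ 2 * ∑ i : Fin dc, ∫ w, (σ (∑ j, w j * X j α) * σ (∑ j, w j * X j β)) ∂gaussianVec d := by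
    intro α β
    have e1 : ∀ W : Fin dc → Fin d → ℝ, ((r • ((Matrix.of W * X).map σ))ᵀ *
      (r • ((Matrix.of W * X).map σ))) α β =
      r ^ 2 * ∑ i : Fin dc, (σ (∑ j, W i j * X j α) * σ (∑ j, W i j * X j β)) := by
      intro W
      simp only [Matrix.mul_apply, Matrix.transpose_apply, Matrix.smul_apply, Matrix.map_apply,
        Matrix.of_apply, smul_eq_mul, Finset.mul_sum]
      refine Finset.sum_congr rfl fun i _ => ?_
      ring
    simp_rw [e1]
    rw [integral_const_mul, integral_finsetSum _ fun i _ =>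
      fv_mul_integrable (n := n) _ _ (hM α) (hM β) i]
    congr 1
    refine Finset.sum_congr rfl fun i _ => ?_
    exact eval_integral (fun w => σ (∑ j, w j * X j α) * σ (∑ j, w j * X j β))
      ((hM α).integrable_mul (hM β)) i
  simp only [Matrix.of_apply]
  simp_rw [ent]
  have e2 : ∑ α, u α * ∑ β, (r ^ 2 * ∑ i : Fin dc,
      ∫ w, (σ (∑ j, w j * X j α) * σ (∑ j, w j * X j β)) ∂gaussianVec d) * v β =
      (r ^ 2 * dc) * ∫ w, fv σ X u w * fv σ X v w ∂gaussianVec d := by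
    have e3 : ∫ w, fv σ X u w * fv σ X v w ∂gaussianVec d =
        ∑ α, ∑ β, u α * v β *
          ∫ w, (σ (∑ j, w j * X j α) * σ (∑ j, w j * X j β)) ∂gaussianVec d := by
      have e4 : ∀ w, fv σ X u w * fv σ X v w = ∑ α, ∑ β, u α * v β *
          (σ (∑ j, w j * X j α) * σ (∑ j, w j * X j β)) := by
        intro w
        unfold fv
        rw [Finset.sum_mul_sum]
        refine Finset.sum_congr rfl fun α _ => Finset.sum_congr rfl fun β _ => ?_
        ring
      simp_rw [e4]
      have hint : ∀ α β, Integrable (fun w => u α * v β *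
          (σ (∑ j, w j * X j α) * σ (∑ j, w j * X j β))) (gaussianVec d) :=
        fun α β => ((hM α).integrable_mul (hM β)).const_mul _
      rw [integral_finsetSum _ fun α _ => integrable_finsetSum _ fun β _ => hint α β]
      refine Finset.sum_congr rfl fun α _ => ?_
      rw [integral_finsetSum _ fun β _ => hint α β]
      refine Finset.sum_congr rfl fun β _ => ?_
      rw [integral_const_mul]
    rw [e3, Finset.mul_sum]
    refine Finset.sum_congr rfl fun α _ => ?_
    rw [Finset.mul_sum, Finset.mul_sum]
    refine Finset.sum_congr rfl fun β _ => ?_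
    simp
    ring
  rw [e2]
  have hr1 : r ^ 2 * dc ≤ 1 := by
    rw [hr, inv_pow, Real.sq_sqrt (Nat.cast_nonneg _)]
    exact inv_mul_le_one
  have hr0 : 0 ≤ r ^ 2 * dc := by positivity
  have b : ∫ w, fv σ X u w * fv σ X v w ∂gaussianVec d ≤ 34 * (l * B) ^ 2 := by
    calc _ ≤ ∫ w, (fv σ X u w ^ 2 + fv σ X v w ^ 2) / 2 ∂gaussianVec d := by
          apply integral_mono (hMu.integrable_mul hMv)
            ((hMu.integrable_sq.add hMv.integrable_sq).div_const 2)
          intro w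
          dsimp
          nlinarith [sq_nonneg (fv σ X u w - fv σ X v w)]
      _ ≤ _ := by
          rw [integral_div, integral_add hMu.integrable_sq hMv.integrable_sq]
          linarith
  have hK : 0 ≤ 34 * (l * B) ^ 2 := by positivity
  calc _ ≤ (r ^ 2 * dc) * (34 * (l * B) ^ 2) := mul_le_mul_of_nonneg_left b hr0
    _ ≤ 1 * (34 * (l * B) ^ 2) := mul_le_mul_of_nonneg_right hr1 hK
    _ = _ := one_mul _

lemma part_b {d n dc : ℕ} (X : Matrix (Fin d) (Fin n) ℝ) (B l : ℝ) (σ σ' : ℝ → ℝ)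
    (h : ∀ x, HasDerivAt σ (σ' x) x) (hc' : Continuous σ') (hb : ∀ x, |σ' x| ≤ l)
    (h0 : ∫ x, σ x ∂(gaussianReal 0 1) = 0) (hX : opNorm X ≤ B)
    (hX2 : ∑ α : Fin n, ((∑ i, X i α ^ 2) - 1) ^ 2 ≤ B ^ 2) (hL : 0 < l * B) :
    gaussianMat dc d
            {W | opNorm ((Real.sqrt dc)⁻¹ • ((Matrix.of W * X).map σ)) ≤
              136 * (1 + Real.sqrt ((n : ℝ) / (dc : ℝ))) * l * B} ≥
          ENNReal.ofReal (1 - 2 * Real.exp (-1 * n)) := by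
  obtain ⟨N, hNc, hN1, hN⟩ := exists_net dc
  obtain ⟨N', hNc', hN1', hN'⟩ := exists_net n
  set r := (Real.sqrt dc)⁻¹ with hr
  have hr0 : 0 ≤ r := by positivity
  set good := {W : Fin dc → Fin d → ℝ | opNorm (r • ((Matrix.of W * X).map σ)) ≤
              136 * (1 + Real.sqrt ((n : ℝ) / (dc : ℝ))) * l * B} with hgood
  let bad : EuclideanSpace ℝ (Fin dc) → EuclideanSpace ℝ (Fin n) → Set (Fin dc → Fin d → ℝ) :=
    fun u v => {W | 6 * (Real.sqrt dc + Real.sqrt n) * (l * B) < ∑ i, u i * fv σ X v (W i)}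
  have hcov : goodᶜ ⊆ ⋃ u ∈ N, ⋃ v ∈ N', bad u v := by
    intro W hW
    by_contra hcon
    apply hW
    simp only [Set.mem_iUnion, not_exists, bad, Set.mem_ofPred_eq, not_lt] at hcon
    have h1 : opNorm (r • ((Matrix.of W * X).map σ)) ≤
        4 * (r * (6 * (Real.sqrt dc + Real.sqrt n) * (l * B))) := by
      apply opNorm_le_of_net N N' hN hN'
      intro u hu v hv
      have h2 := hcon u hu v hv
      refine le_trans (le_of_eq ?_) (mul_le_mul_of_nonneg_left h2 hr0)
      rw [Finset.mul_sum]
      refine Finset.sum_congr rfl fun i _ => ?_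
      simp only [fv, Matrix.smul_apply, Matrix.map_apply, Matrix.mul_apply, Matrix.of_apply,
        smul_eq_mul, Finset.mul_sum]
      refine Finset.sum_congr rfl fun α _ => ?_
      ring
    refine h1.trans ?_
    have h3 : r * (Real.sqrt dc + Real.sqrt n) ≤ 1 + Real.sqrt ((n : ℝ) / (dc : ℝ)) := by
      rw [mul_add]
      apply add_le_add
      · exact inv_mul_le_one
      · rw [Real.sqrt_div (Nat.cast_nonneg _), hr, div_eq_inv_mul]
    have h4 : 0 ≤ 1 + Real.sqrt ((n : ℝ) / (dc : ℝ)) := by positivity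
    calc 4 * (r * (6 * (Real.sqrt dc + Real.sqrt n) * (l * B)))
        = 24 * (r * (Real.sqrt dc + Real.sqrt n)) * (l * B) := by ring
      _ ≤ 24 * (1 + Real.sqrt ((n : ℝ) / (dc : ℝ))) * (l * B) := by gcongr
      _ ≤ 136 * (1 + Real.sqrt ((n : ℝ) / (dc : ℝ))) * (l * B) := by gcongr; norm_num
      _ = _ := by ring
  have hbad : ∀ u ∈ N, ∀ v ∈ N', gaussianMat dc d (bad u v) ≤
      ENNReal.ofReal (Real.exp (-3 * (dc + n))) := by
    intro u hu v hv
    obtain ⟨c1, -, m1, g1, -⟩ := fv_props X B l σ σ' h hc' hb h0 hX hX2 hL v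
      (norm_sq_le_one v (hN1' v hv))
    exact tail_bound (fv σ X v) (l * B) _ hL c1 m1 g1 u (norm_sq_le_one u (hN1 u hu))
  have hgc : gaussianMat dc d goodᶜ ≤ ENNReal.ofReal (Real.exp (-1 * n)) := by
    calc gaussianMat dc d goodᶜ ≤ gaussianMat dc d (⋃ u ∈ N, ⋃ v ∈ N', bad u v) :=
          measure_mono hcov
      _ ≤ ∑ u ∈ N, gaussianMat dc d (⋃ v ∈ N', bad u v) := measure_biUnion_finset_le _ _
      _ ≤ ∑ u ∈ N, ∑ v ∈ N', gaussianMat dc d (bad u v) :=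
          Finset.sum_le_sum fun u _ => measure_biUnion_finset_le _ _
      _ ≤ ∑ u ∈ N, ∑ v ∈ N', ENNReal.ofReal (Real.exp (-3 * (dc + n))) :=
          Finset.sum_le_sum fun u hu => Finset.sum_le_sum fun v hv => hbad u hu v hv
      _ = ENNReal.ofReal ((N.card : ℝ) * ((N'.card : ℝ) * Real.exp (-3 * (dc + n)))) := by
          rw [ENNReal.ofReal_mul (by positivity), ENNReal.ofReal_mul (by positivity)]
          simp
      _ ≤ ENNReal.ofReal (Real.exp (-1 * n)) := by
          apply ENNReal.ofReal_le_ofReal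
          have h5 : (5 : ℝ) ≤ Real.exp 2 := by
            have := Real.exp_one_gt_d9
            rw [show (2:ℝ) = 1 + 1 by norm_num, Real.exp_add]
            nlinarith
          have h6 : ∀ k : ℕ, (5 : ℝ) ^ k ≤ Real.exp (2 * k) := by
            intro k
            rw [mul_comm, Real.exp_nat_mul]
            exact pow_le_pow_left₀ (by norm_num) h5 k
          have h7 : (N.card : ℝ) ≤ Real.exp (2 * dc) := le_trans (by exact_mod_cast hNc) (h6 dc)
          have h8 : (N'.card : ℝ) ≤ Real.exp (2 * n) := le_trans (by exact_mod_cast hNc') (h6 n)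
          calc _ ≤ Real.exp (2 * dc) * (Real.exp (2 * n) * Real.exp (-3 * (dc + n))) := by gcongr
            _ = Real.exp (-1 * (dc + n)) := by
                rw [← Real.exp_add, ← Real.exp_add]; congr 1; ring
            _ ≤ _ := by
                apply Real.exp_le_exp.2
                have : (0:ℝ) ≤ dc := Nat.cast_nonneg _
                linarith
  have hone : 1 ≤ gaussianMat dc d good + gaussianMat dc d goodᶜ := by
    have := measure_union_le (μ := gaussianMat dc d) good goodᶜ
    rwa [Set.union_compl_self, measure_univ] at this
  have h9 : (1 : ENNReal) - ENNReal.ofReal (Real.exp (-1 * n)) ≤ gaussianMat dc d good := by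
    rw [tsub_le_iff_right]
    exact hone.trans (add_le_add le_rfl hgc)
  refine le_trans ?_ h9
  rw [← ENNReal.ofReal_one, ← ENNReal.ofReal_sub _ (Real.exp_pos _).le]
  apply ENNReal.ofReal_le_ofReal
  have := Real.exp_pos (-1 * (n : ℝ))
  linarith

theorem norm_bounds :
    ∃ C : ℝ, 0 < C ∧ ∃ c : ℝ, 0 < c ∧
      ∀ (d n dc : ℕ) (X : Matrix (Fin d) (Fin n) ℝ) (ε B lamσ : ℝ)
        (σ σ' σ'' : ℝ → ℝ),
        (∀ x, HasDerivAt σ (σ' x) x) →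
        (∀ x, HasDerivAt σ' (σ'' x) x) →
        (∀ x, |σ' x| ≤ lamσ) →
        (∀ x, |σ'' x| ≤ lamσ) →
        (∫ x, σ x ∂stdGaussian) = 0 →
        (∫ x, (σ x) ^ 2 ∂stdGaussian) = 1 →
        IsOrthonormal ε B X →
        ε < 1 / lamσ →
        -- (a) operator norm of Φ = E[X̌ᵀX̌]
        (opNorm
            (Matrix.of fun α β : Fin n =>
              ∫ W, (((Real.sqrt dc)⁻¹ • ((Matrix.of W * X).map σ))ᵀ *
                  ((Real.sqrt dc)⁻¹ • ((Matrix.of W * X).map σ))) α β ∂gaussianMat dc d) ≤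
          C * lamσ ^ 2 * B ^ 2) ∧
        -- (b) operator norm of X̌, with high probability
        gaussianMat dc d
            {W | opNorm ((Real.sqrt dc)⁻¹ • ((Matrix.of W * X).map σ)) ≤
              C * (1 + Real.sqrt ((n : ℝ) / (dc : ℝ))) * lamσ * B} ≥
          ENNReal.ofReal (1 - 2 * Real.exp (-c * n)) := by
  refine ⟨136, by norm_num, 1, by norm_num, ?_⟩
  intro d n dc X ε B l σ σ' σ'' h h' hb hb' h0 h1 hX hε
  obtain ⟨-, -, hXB, hX2⟩ := hX
  have hB0 : 0 ≤ B := (norm_nonneg _).trans hXB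
  have hl0 : 0 ≤ l := (abs_nonneg _).trans (hb 0)
  have hc' : Continuous σ' := continuous_iff_continuousAt.2 fun x => (h' x).continuousAt
  rcases Nat.eq_zero_or_pos n with hn | hn
  · subst hn
    constructor
    · have h0 : ∀ A : Matrix (Fin 0) (Fin 0) ℝ, opNorm A = 0 := by
        intro A
        have : A = 0 := by ext i; exact i.elim0
        rw [this]; simp [opNorm]
      rw [h0]; positivity
    · have e : (1 - 2 * Real.exp (-1 * ((0 : ℕ) : ℝ))) ≤ 0 := by simp
      rw [ENNReal.ofReal_of_nonpos e]
      exact zero_le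
  have hl : 0 < l := by
    rcases hl0.lt_or_eq with hl | hl
    · exact hl
    exfalso
    have hconst : ∀ x, σ x = σ 0 := by
      intro x
      have := sig_lip σ σ' l h hb x 0
      rw [← hl, zero_mul] at this
      exact sub_eq_zero.1 (abs_eq_zero.1 (le_antisymm this (abs_nonneg _)))
    simp_rw [hconst] at h0 h1
    simp at h0 h1
    rw [h0] at h1
    norm_num at h1
  have hB : 0 < B := by
    rcases hB0.lt_or_eq with hB | hB
    · exact hB
    exfalso
    have hz := fun v => opNorm_sq_bound X B hXB v
    rw [← hB] at hX2
    have hX0 : ∀ α, ∑ i, X i α ^ 2 = 0 := by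
      intro α
      have := hz (Pi.single α 1)
      rw [← hB] at this
      simp [Pi.single_apply] at this
      exact le_antisymm this (Finset.sum_nonneg fun _ _ => sq_nonneg _)
    simp [hX0] at hX2
    omega
  have hL : 0 < l * B := mul_pos hl hB
  exact ⟨part_a X B l σ σ' h hc' hb h0 hXB hX2 hL, part_b X B l σ σ' h hc' hb h0 hXB hX2 hL⟩
end

section
/- Let X ∈ ℝ^{d×n} be (ε,B)-orthonormal, let W ∈ ℝ^{ď×d} have i.i.d. N(0,1) entries, and let x_α, x_β be two distinct columns of X; let σ be twice differentiable with |σ'|,|σ''| ≤ λ_σ, E[σ(ξ)]=0, E[σ(ξ)²]=1 for ξ ~ N(0,1), and set b_σ = E[σ'(ξ)], a_σ = E[σ'(ξ)²]. Then there are universal constants C, c > 0 such that for any t > 0: (a) with probability at least 1 − 2e^{−c ď t²}, |(1/ď) Tr(diag(σ'(Wx_α)) diag(σ'(Wx_β))) − b_σ²| ≤ Cλ_σ²(ε + t); and (b) for any deterministic symmetric matrix M ∈ ℝ^{d×d}, with probability at least 1 − (2ď+2)e^{−c min(t²ď, t√ď)}, |(1/ď) Tr(diag(σ'(Wx_α))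 W M Wᵀ diag(σ'(Wx_β))) − b_σ² Tr M| ≤ Cλ_σ²(ε√d + t√d + t√ď)‖M‖_F. Moreover, both (a) and (b) hold with (x_α, x_α) in place of (x_α, x_β) upon replacing b_σ² by a_σ. -/
/-!
Lemma (trace approximations for backpropagation factors): concentration of
`(1/ď)Tr(D_α D_β)` around `b_σ²` and of `(1/ď)Tr(D_α W M Wᵀ D_β)` around `b_σ² Tr M`,
together with the diagonal versions in which `b_σ²` is replaced by `a_σ`.
-/

open MeasureTheory ProbabilityTheory Filter Topology Matrix

/-- Squared Frobenius norm. -/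
def frobSq {m n : ℕ} (X : Matrix (Fin m) (Fin n) ℝ) : ℝ :=
  ∑ i, ∑ j, (X i j) ^ 2

lemma ta_map_toLp (d : ℕ) :
    (gaussianVec d).map (WithLp.toLp 2) = ProbabilityTheory.stdGaussian (EuclideanSpace ℝ (Fin d)) :=
  map_pi_eq_stdGaussian

lemma ta_inner {d : ℕ} (x w : Fin d → ℝ) :
    inner ℝ (WithLp.toLp 2 x) (WithLp.toLp 2 w) = ∑ i, w i * x i := by
  simp [PiLp.inner_apply]

lemma ta_gl (d : ℕ) : HasGaussianLaw (fun w : Fin d → ℝ => WithLp.toLp 2 w) (gaussianVec d) := by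
  constructor
  have := ta_map_toLp d
  rw [this]; infer_instance

lemma ta_law {d : ℕ} (x : Fin d → ℝ) :
    (gaussianVec d).map (fun w => ∑ i, w i * x i) =
      gaussianReal 0 (∑ i, x i ^ 2).toNNReal := by
  set L : StrongDual ℝ (EuclideanSpace ℝ (Fin d)) := innerSL ℝ (WithLp.toLp 2 x) with hL
  have h1 : (fun w : Fin d → ℝ => ∑ i, w i * x i) = L ∘ (WithLp.toLp 2) := by
    ext w; rw [← ta_inner]; rfl
  rw [h1, ← Measure.map_map (by fun_prop) (by fun_prop), ta_map_toLp,
    IsGaussian.map_eq_gaussianReal L, integral_strongDual_stdGaussian, variance_dual_stdGaussian]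
  congr 2
  rw [hL, innerSL_apply_norm, EuclideanSpace.real_norm_sq_eq]

lemma ta_law' {d : ℕ} (x : Fin d → ℝ) :
    (gaussianVec d).map (fun w => ∑ i, w i * x i) =
      (gaussianReal 0 1).map (fun z => Real.sqrt (∑ i, x i ^ 2) * z) := by
  rw [ta_law, gaussianReal_map_const_mul]
  congr 1
  · simp
  · ext
    have : 0 ≤ ∑ i, x i ^ 2 := Finset.sum_nonneg fun i _ => sq_nonneg _
    simp [this]

lemma ta_indep {d : ℕ} (x y : Fin d → ℝ) (h : ∑ i, x i * y i = 0) :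
    IndepFun (fun w : Fin d → ℝ => ∑ i, w i * x i) (fun w => ∑ i, w i * y i) (gaussianVec d) := by
  apply HasGaussianLaw.indepFun_of_covariance_eq_zero
  · have := (ta_gl d).map ((innerSL ℝ (WithLp.toLp 2 x)).prod (innerSL ℝ (WithLp.toLp 2 y)))
    have hf : (fun w : Fin d → ℝ => (∑ i, w i * x i, ∑ i, w i * y i)) =
        ((innerSL ℝ (WithLp.toLp 2 x)).prod (innerSL ℝ (WithLp.toLp 2 y))) ∘
          fun w : Fin d → ℝ => WithLp.toLp 2 w := by
      funext w
      simp only [← ta_inner]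
      rfl
    rw [hf]
    exact this
  · have := covarianceBilin_apply_eq_cov (μ := ProbabilityTheory.stdGaussian (EuclideanSpace ℝ (Fin d)))
      IsGaussian.memLp_two_id (WithLp.toLp 2 x) (WithLp.toLp 2 y)
    rw [covarianceBilin_stdGaussian, ← ta_map_toLp, covariance_map (by fun_prop) (by fun_prop) (by fun_prop)] at this
    simp only [← ta_inner]
    refine this.symm.trans ?_
    rw [innerSL_apply_apply, ta_inner, ← h]
    exact Finset.sum_congr rfl fun i _ => mul_comm _ _

lemma ta_int_sq : ∫ x, x ^ 2 ∂(gaussianReal 0 1) = 1 := by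
  have := variance_id_gaussianReal (μ := 0) (v := 1)
  rw [variance_eq_integral (by fun_prop)] at this
  simpa using this

lemma ta_integrable_sq : Integrable (fun x : ℝ => x ^ 2) (gaussianReal 0 1) := by
  have : MemLp id 2 (gaussianReal 0 1) := IsGaussian.memLp_two_id
  exact this.integrable_sq

lemma ta_integrable_id : Integrable (fun x : ℝ => x) (gaussianReal 0 1) :=
  IsGaussian.integrable_id

lemma ta_int_abs : ∫ x, |x| ∂(gaussianReal 0 1) ≤ 1 := by
  have h : ∫ x, |x| ∂(gaussianReal 0 1) ≤ ∫ x, (1 + x ^ 2) / 2 ∂(gaussianReal 0 1) := by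
    apply integral_mono
    · exact ta_integrable_id.abs
    · exact ((integrable_const 1).add ta_integrable_sq).div_const 2
    · intro x; simp only; nlinarith [sq_nonneg (|x| - 1), sq_abs x]
  rw [integral_div, integral_add (integrable_const 1) ta_integrable_sq, ta_int_sq] at h
  simpa using h.trans_eq (by norm_num)

lemma ta_dot_integrable {d : ℕ} (x : Fin d → ℝ) :
    Integrable (fun w : Fin d → ℝ => ∑ i, w i * x i) (gaussianVec d) := by
  have h : Integrable id ((gaussianVec d).map (fun w => ∑ i, w i * x i)) := by
    rw [ta_law]; exact IsGaussian.integrable_id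
  exact h.comp_measurable (by fun_prop)

lemma ta_dot_abs {d : ℕ} (x : Fin d → ℝ) :
    ∫ w, |∑ i, w i * x i| ∂(gaussianVec d) ≤ Real.sqrt (∑ i, x i ^ 2) := by
  have h : ∫ w, |∑ i, w i * x i| ∂(gaussianVec d) =
      ∫ z, |z| ∂((gaussianVec d).map (fun w => ∑ i, w i * x i)) := by
    rw [integral_map (Measurable.aemeasurable (by fun_prop)) (by fun_prop)]
  rw [h, ta_law', integral_map (by fun_prop) (by fun_prop)]
  simp only [abs_mul, abs_of_nonneg (Real.sqrt_nonneg _)]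
  rw [integral_const_mul]
  exact mul_le_of_le_one_right (Real.sqrt_nonneg _) ta_int_abs

/-- one-dimensional comparison -/
lemma ta_one_dim {d : ℕ} (x : Fin d → ℝ) (g : ℝ → ℝ) (K L : ℝ) (hK : 0 ≤ K)
    (hc : Continuous g) (hb : ∀ z, |g z| ≤ L) (hl : ∀ a b, |g a - g b| ≤ K * |a - b|) :
    |∫ w, g (∑ i, w i * x i) ∂(gaussianVec d) - ∫ z, g z ∂(gaussianReal 0 1)| ≤
      K * |(∑ i, x i ^ 2) - 1| := by
  have h : ∫ w, g (∑ i, w i * x i) ∂(gaussianVec d) =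
      ∫ z, g z ∂((gaussianVec d).map (fun w => ∑ i, w i * x i)) := by
    rw [integral_map (Measurable.aemeasurable (by fun_prop)) (by fun_prop)]
  have hint : ∀ r : ℝ, Integrable (fun z => g (r * z)) (gaussianReal 0 1) := fun r =>
    Integrable.of_bound (C := L) (by fun_prop) (ae_of_all _ fun z => by simpa using hb _)
  rw [h, ta_law', integral_map (by fun_prop) (by fun_prop)]
  set r := Real.sqrt (∑ i, x i ^ 2) with hr
  have hr0 : 0 ≤ r := Real.sqrt_nonneg _
  have hr2 : r ^ 2 = ∑ i, x i ^ 2 := Real.sq_sqrt (Finset.sum_nonneg fun i _ => sq_nonneg _)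
  have hi1 := hint 1
  simp only [one_mul] at hi1
  rw [← integral_sub (hint r) hi1]
  have h2 : |∫ z, (g (r * z) - g z) ∂(gaussianReal 0 1)| ≤
      ∫ z, K * |r - 1| * |z| ∂(gaussianReal 0 1) := by
    refine abs_integral_le_integral_abs.trans (integral_mono ((hint r).sub hi1).abs
      (ta_integrable_id.abs.const_mul _) fun z => ?_)
    refine (hl _ _).trans (le_of_eq ?_)
    rw [mul_assoc, ← abs_mul]; ring_nf
  refine h2.trans ?_
  rw [integral_const_mul, ← hr2]
  have h3 : |r - 1| ≤ |r ^ 2 - 1| := by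
    rw [show r ^ 2 - 1 = (r - 1) * (r + 1) by ring, abs_mul]
    exact le_mul_of_one_le_right (abs_nonneg _) (by rw [abs_of_nonneg] <;> linarith)
  calc K * |r - 1| * ∫ z, |z| ∂(gaussianReal 0 1) ≤ K * |r - 1| * 1 := by
        gcongr; exact ta_int_abs
    _ ≤ _ := by rw [mul_one]; gcongr

lemma ta_bias_diag {d : ℕ} (x : Fin d → ℝ) (s : ℝ → ℝ) (L e : ℝ) 
    (hc : Continuous s) (hb : ∀ z, |s z| ≤ L) (hl : ∀ a b, |s a - s b| ≤ L * |a - b|)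
    (hx : |(∑ i, x i ^ 2) - 1| ≤ e) :
    |∫ w, s (∑ i, w i * x i) * s (∑ i, w i * x i) ∂(gaussianVec d) -
      ∫ z, (s z) ^ 2 ∂(gaussianReal 0 1)| ≤ 5 * L ^ 2 * e := by
  have hL : 0 ≤ L := (abs_nonneg _).trans (hb 0)
  have h := ta_one_dim x (fun z => s z ^ 2) (2 * L ^ 2) (L ^ 2) (by positivity) (by fun_prop)
    (fun z => by rw [abs_pow]; exact pow_le_pow_left₀ (abs_nonneg _) (hb z) 2)
    (fun a b => by
      rw [show s a ^ 2 - s b ^ 2 = (s a + s b) * (s a - s b) by ring, abs_mul]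
      have : |s a + s b| ≤ 2 * L := (abs_add_le _ _).trans (by linarith [hb a, hb b])
      calc _ ≤ (2 * L) * (L * |a - b|) := by gcongr; exact hl a b
        _ = _ := by ring)
  simp only [← pow_two]
  refine h.trans ?_
  have he : 0 ≤ e := (abs_nonneg _).trans hx
  calc _ ≤ 2 * L ^ 2 * e := by gcongr
    _ ≤ _ := by gcongr; norm_num

lemma ta_bias_off {d : ℕ} (x y : Fin d → ℝ) (s : ℝ → ℝ) (L e : ℝ) 
    (hc : Continuous s) (hb : ∀ z, |s z| ≤ L) (hl : ∀ a b, |s a - s b| ≤ L * |a - b|)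
    (hx : |(∑ i, x i ^ 2) - 1| ≤ e) (hy : |(∑ i, y i ^ 2) - 1| ≤ e)
    (hxy : |∑ i, x i * y i| ≤ e) :
    |∫ w, s (∑ i, w i * x i) * s (∑ i, w i * y i) ∂(gaussianVec d) -
      (∫ z, s z ∂(gaussianReal 0 1)) ^ 2| ≤ 5 * L ^ 2 * e := by
  have hL : 0 ≤ L := (abs_nonneg _).trans (hb 0)
  have he : 0 ≤ e := (abs_nonneg _).trans hx
  have hb' : |∫ z, s z ∂(gaussianReal 0 1)| ≤ L := by
    have := norm_integral_le_of_norm_le_const (μ := gaussianReal 0 1) (f := s) (C := L)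
      (ae_of_all _ fun z => by simpa using hb z)
    simpa using this
  have hbx : ∀ v : Fin d → ℝ, |∫ w, s (∑ i, w i * v i) ∂(gaussianVec d)| ≤ L := fun v => by
    have := norm_integral_le_of_norm_le_const (μ := gaussianVec d)
      (f := fun w => s (∑ i, w i * v i)) (C := L) (ae_of_all _ fun z => by simpa using hb _)
    simpa using this
  have hbb : ∀ u v : Fin d → ℝ, ∀ w : Fin d → ℝ, |s (∑ i, w i * u i) * s (∑ i, w i * v i)| ≤ L ^ 2 :=
    fun u v w => by
      rw [abs_mul, pow_two]; exact mul_le_mul (hb _) (hb _) (abs_nonneg _) hL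
  have hbi : ∀ u v : Fin d → ℝ,
      Integrable (fun w => s (∑ i, w i * u i) * s (∑ i, w i * v i)) (gaussianVec d) := fun u v =>
    Integrable.of_bound (C := L ^ 2) (by fun_prop) (ae_of_all _ fun z => by simpa using hbb u v z)
  set b := ∫ z, s z ∂(gaussianReal 0 1) with hbdef
  by_cases hsmall : 1 / 2 ≤ e
  · have h1 : |∫ w, s (∑ i, w i * x i) * s (∑ i, w i * y i) ∂(gaussianVec d)| ≤ L ^ 2 := by
      have := norm_integral_le_of_norm_le_const (μ := gaussianVec d)
        (f := fun w => s (∑ i, w i * x i) * s (∑ i, w i * y i)) (C := L ^ 2)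
        (ae_of_all _ fun z => by simpa using hbb _ _ z)
      simpa using this
    have h2 : |b ^ 2| ≤ L ^ 2 := by
      rw [abs_pow]; exact pow_le_pow_left₀ (abs_nonneg _) hb' 2
    have := abs_sub (∫ w, s (∑ i, w i * x i) * s (∑ i, w i * y i) ∂(gaussianVec d)) (b ^ 2)
    nlinarith [sq_nonneg L]
  · push Not at hsmall
    set N := ∑ i, x i ^ 2 with hN
    set p := ∑ i, x i * y i with hp
    have hN2 : 1 / 2 ≤ N := by have := abs_le.1 hx; linarith
    have hN0 : N ≠ 0 := by linarith
    set z : Fin d → ℝ := fun i => y i - p / N * x i with hz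
    have hxz : ∑ i, x i * z i = 0 := by
      have : ∑ i, x i * z i = p - p / N * N := by
        rw [hp, hN, Finset.mul_sum, ← Finset.sum_sub_distrib]
        exact Finset.sum_congr rfl fun i _ => by simp only [hz]; ring
      rw [this]; field_simp; ring
    have hzz : ∑ i, z i ^ 2 = (∑ i, y i ^ 2) - p ^ 2 / N := by
      have : ∑ i, z i ^ 2 = (∑ i, y i ^ 2) - 2 * (p / N) * p + (p / N) ^ 2 * N := by
        rw [hp, hN, Finset.mul_sum, Finset.mul_sum, ← Finset.sum_sub_distrib,
          ← Finset.sum_add_distrib]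
        exact Finset.sum_congr rfl fun i _ => by simp only [hz]; ring
      rw [this]; field_simp; ring
    have hp2 : p ^ 2 ≤ e ^ 2 := by rw [← sq_abs p]; exact pow_le_pow_left₀ (abs_nonneg _) hxy 2
    have hpN : p ^ 2 / N ≤ 2 * e ^ 2 := by
      rw [div_le_iff₀ (by linarith)]; nlinarith [sq_nonneg e]
    have hpN0 : 0 ≤ p ^ 2 / N := by positivity
    have hz1 : |(∑ i, z i ^ 2) - 1| ≤ 2 * e := by
      rw [hzz]; have := abs_le.1 hy; rw [abs_le]; constructor <;> nlinarith
    -- step 1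
    have s1 : |∫ w, s (∑ i, w i * x i) * s (∑ i, w i * y i) ∂(gaussianVec d) -
        ∫ w, s (∑ i, w i * x i) * s (∑ i, w i * z i) ∂(gaussianVec d)| ≤ L ^ 2 * (2 * e) := by
      rw [← integral_sub (hbi x y) (hbi x z)]
      have hd := ta_dot_abs (fun i => p / N * x i)
      have hs : Real.sqrt (∑ i, (p / N * x i) ^ 2) ≤ 2 * e := by
        apply Real.sqrt_le_iff.2 ⟨by linarith, ?_⟩
        have : ∑ i, (p / N * x i) ^ 2 = p ^ 2 / N := by
          simp only [mul_pow]
          rw [← Finset.mul_sum, ← hN]; field_simp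
        rw [this]; nlinarith [sq_nonneg e]
      calc _ ≤ ∫ w, L ^ 2 * |∑ i, w i * (p / N * x i)| ∂(gaussianVec d) := by
            refine abs_integral_le_integral_abs.trans (integral_mono ((hbi x y).sub (hbi x z)).abs
              ((ta_dot_integrable _).abs.const_mul _) fun w => ?_)
            simp only
            rw [← mul_sub, abs_mul, pow_two, mul_assoc]
            refine mul_le_mul (hb _) ((hl _ _).trans (le_of_eq ?_)) (abs_nonneg _) hL
            rw [← Finset.sum_sub_distrib]
            congr 2
            exact Finset.sum_congr rfl fun i _ => by simp only [hz]; ring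
        _ ≤ _ := by
            rw [integral_const_mul]; gcongr; exact hd.trans hs
    have s2 : ∫ w, s (∑ i, w i * x i) * s (∑ i, w i * z i) ∂(gaussianVec d) =
        (∫ w, s (∑ i, w i * x i) ∂(gaussianVec d)) * ∫ w, s (∑ i, w i * z i) ∂(gaussianVec d) :=
      (ta_indep x z hxz).integral_fun_comp_mul_comp (Measurable.aemeasurable (by fun_prop))
        (Measurable.aemeasurable (by fun_prop)) (by fun_prop)
        (by fun_prop)
    have s3 := ta_one_dim x s L L hL hc hb hl
    have s4 := ta_one_dim z s L L hL hc hb hl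
    rw [s2] at s1
    rw [← hbdef] at s3 s4
    have hbz := hbx z
    set I1 := ∫ w, s (∑ i, w i * x i) ∂(gaussianVec d)
    set I2 := ∫ w, s (∑ i, w i * z i) ∂(gaussianVec d)
    have s3' : |I1 - b| ≤ L * e := s3.trans (by gcongr)
    have s4' : |I2 - b| ≤ L * (2 * e) := s4.trans (by gcongr)
    have s5 : |I1 * I2 - b ^ 2| ≤ L * (L * e) + L * (L * (2 * e)) := by
      rw [show I1 * I2 - b ^ 2 = I2 * (I1 - b) + b * (I2 - b) by ring]
      refine (abs_add_le _ _).trans ?_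
      rw [abs_mul, abs_mul]
      gcongr
    refine (abs_sub_le _ (I1 * I2) _).trans ?_
    nlinarith

lemma ta_hoeff_one {d dc : ℕ} (f : (Fin d → ℝ) → ℝ) (hf : Measurable f) (L t : ℝ) (hL : 0 < L)
    (hb : ∀ w, |f w| ≤ L) (ht : 0 < t) :
    (gaussianMat dc d).real {W | dc * (L * t) ≤
      ∑ k, (f (W k) - ∫ w, f w ∂(gaussianVec d))} ≤ Real.exp (-(1 / 2) * dc * t ^ 2) := by
  have hind : iIndepFun (fun (k : Fin dc) (W : Fin dc → Fin d → ℝ) =>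
      f (W k) - ∫ w, f w ∂(gaussianVec d)) (gaussianMat dc d) :=
    iIndepFun_pi (X := fun (_ : Fin dc) (w : Fin d → ℝ) => f w - ∫ w, f w ∂(gaussianVec d))
      (fun i => (hf.sub_const _).aemeasurable)
  have hsub : ∀ k ∈ (Finset.univ : Finset (Fin dc)), HasSubgaussianMGF
      (fun (W : Fin dc → Fin d → ℝ) => f (W k) - ∫ w, f w ∂(gaussianVec d))
      ((‖L - (-L)‖₊ / 2) ^ 2) (gaussianMat dc d) := by
    intro k _
    have h1 : ∫ W, f (W k) ∂(gaussianMat dc d) = ∫ w, f w ∂(gaussianVec d) := by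
      have := (measurePreserving_eval (fun _ : Fin dc => gaussianVec d) k)
      rw [← this.map_eq, integral_map this.measurable.aemeasurable
        hf.aestronglyMeasurable]
    rw [← h1]
    exact hasSubgaussianMGF_of_mem_Icc
      ((hf.comp (measurable_pi_apply k)).aemeasurable)
      (ae_of_all _ fun W => abs_le.1 (hb _))
  have h := HasSubgaussianMGF.measure_sum_ge_le_of_iIndepFun hind hsub
    (ε := dc * (L * t)) (by positivity)
  refine h.trans (Real.exp_le_exp.2 (le_of_eq ?_))
  have h2 : ((‖L - (-L)‖₊ / 2) ^ 2 : NNReal) = (L ^ 2 : ℝ) := by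
    push_cast
    rw [Real.norm_eq_abs, sub_neg_eq_add, abs_of_pos (by linarith)]
    ring
  simp only [Finset.sum_const, Finset.card_univ, Fintype.card_fin, nsmul_eq_mul, NNReal.coe_mul,
    NNReal.coe_natCast, h2]
  rcases Nat.eq_zero_or_pos dc with h0 | h0
  · subst h0; simp
  · have : (dc : ℝ) ≠ 0 := by positivity
    field_simp

lemma ta_hoeff {d dc : ℕ} (hdc : 0 < dc) (f : (Fin d → ℝ) → ℝ) (hf : Measurable f) (L t : ℝ)
    (hb : ∀ w, |f w| ≤ L) (ht : 0 < t) :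
    (gaussianMat dc d).real {W | L * t <
      |(dc : ℝ)⁻¹ * ∑ k, f (W k) - ∫ w, f w ∂(gaussianVec d)|} ≤
      2 * Real.exp (-(1 / 2) * dc * t ^ 2) := by
  have hL : 0 ≤ L := (abs_nonneg _).trans (hb 0)
  rcases hL.eq_or_lt with h0 | hL
  · have hz : ∀ w, f w = 0 := fun w => abs_nonpos_iff.1 ((hb w).trans_eq h0.symm)
    simp [hz, ← h0]
    positivity
  have hdc' : (0 : ℝ) < dc := by exact_mod_cast hdc
  have h1 := ta_hoeff_one (dc := dc) f hf L t hL hb ht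
  have h2 := ta_hoeff_one (dc := dc) (fun w => -f w) hf.neg L t hL (by simpa using hb) ht
  have hsub : {W : Fin dc → Fin d → ℝ | L * t <
      |(dc : ℝ)⁻¹ * ∑ k, f (W k) - ∫ w, f w ∂(gaussianVec d)|} ⊆
      {W | dc * (L * t) ≤ ∑ k, (f (W k) - ∫ w, f w ∂(gaussianVec d))} ∪
      {W | dc * (L * t) ≤ ∑ k, (-f (W k) - ∫ w, -f w ∂(gaussianVec d))} := by
    intro W hW
    simp only [Set.mem_ofPred_eq, Set.mem_union] at hW ⊢
    have e1 : ∑ k, (f (W k) - ∫ w, f w ∂(gaussianVec d)) =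
        dc * ((dc : ℝ)⁻¹ * ∑ k, f (W k) - ∫ w, f w ∂(gaussianVec d)) := by
      rw [Finset.sum_sub_distrib]; simp; field_simp
    have e2 : ∑ k, (-f (W k) - ∫ w, -f w ∂(gaussianVec d)) =
        dc * -((dc : ℝ)⁻¹ * ∑ k, f (W k) - ∫ w, f w ∂(gaussianVec d)) := by
      rw [integral_neg, Finset.sum_sub_distrib, Finset.sum_neg_distrib]; simp; field_simp; ring
    rw [e1, e2]
    rcases lt_abs.1 hW with h | h
    · left; gcongr
    · right; gcongr
  calc _ ≤ _ := measureReal_mono hsub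
    _ ≤ _ := measureReal_union_le _ _
    _ ≤ _ := by linarith

lemma ta_exp_ineq (x : ℝ) (hx : |x| ≤ 1 / 4) : (1 - x)⁻¹ ≤ Real.exp (x + x ^ 2) := by
  have hx' := abs_le.1 hx
  rw [inv_le_iff_one_le_mul₀ (by linarith)]
  rcases le_total x 0 with h | h
  · have := Real.add_one_le_exp (x + x ^ 2)
    have h2 : 0 ≤ -x ^ 3 := by nlinarith [mul_nonneg (neg_nonneg.2 h) (sq_nonneg x)]
    nlinarith
  · have := Real.quadratic_le_exp_of_nonneg (x := x + x ^ 2) (by positivity)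
    have h3 : 1 + x + x ^ 2 + x ^ 2 / 2 ≤ Real.exp (x + x ^ 2) := by nlinarith [pow_nonneg h 3, pow_nonneg h 4]
    have h4 : 1 ≤ (1 + x + x ^ 2 + x ^ 2 / 2) * (1 - x) := by
      nlinarith [mul_nonneg (sq_nonneg x) (by linarith : (0:ℝ) ≤ 1 - 3 * x)]
    nlinarith

lemma ta_mgf (a : ℝ) (ha : |a| ≤ 1 / 8) :
    Integrable (fun z : ℝ => Real.exp (a * (z ^ 2 - 1))) (gaussianReal 0 1) ∧
    ∫ z, Real.exp (a * (z ^ 2 - 1)) ∂(gaussianReal 0 1) ≤ Real.exp (2 * a ^ 2) := by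
  have ha' := abs_le.1 ha
  have hpt : ∀ z : ℝ, gaussianPDFReal 0 1 z * Real.exp (a * (z ^ 2 - 1)) =
      ((Real.sqrt (2 * Real.pi))⁻¹ * Real.exp (-a)) * Real.exp (-(1 / 2 - a) * z ^ 2) := by
    intro z
    rw [gaussianPDFReal]
    simp only [NNReal.coe_one, mul_one, sub_zero]
    rw [mul_assoc, mul_assoc, ← Real.exp_add, ← Real.exp_add]
    ring_nf
  have hpos : 0 < 1 / 2 - a := by linarith
  constructor
  · rw [gaussianReal_of_var_ne_zero _ one_ne_zero,
      integrable_withDensity_iff_integrable_smul' (measurable_gaussianPDF _ _)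
        (ae_of_all _ fun _ => gaussianPDF_lt_top)]
    simp only [toReal_gaussianPDF, smul_eq_mul, hpt]
    exact (integrable_exp_neg_mul_sq hpos).const_mul _
  · rw [integral_gaussianReal_eq_integral_smul one_ne_zero]
    simp only [smul_eq_mul, hpt]
    rw [integral_const_mul, integral_gaussian]
    have h1 : (Real.sqrt (2 * Real.pi))⁻¹ * Real.exp (-a) * Real.sqrt (Real.pi / (1 / 2 - a)) =
        Real.exp (-a) * Real.sqrt ((1 - 2 * a)⁻¹) := by
      rw [mul_comm (Real.sqrt (2 * Real.pi))⁻¹, mul_assoc, ← Real.sqrt_inv,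
        ← Real.sqrt_mul (by positivity)]
      congr 2
      have := Real.pi_pos.ne'
      have : 1 - 2 * a ≠ 0 := by linarith
      have : 1 / 2 - a ≠ 0 := hpos.ne'
      field_simp
    rw [h1]
    have h2 := ta_exp_ineq (2 * a) (by rw [abs_mul]; norm_num; linarith)
    have h3 : Real.sqrt ((1 - 2 * a)⁻¹) ≤ Real.exp (a + 2 * a ^ 2) := by
      rw [Real.sqrt_le_iff]
      refine ⟨(Real.exp_pos _).le, h2.trans (le_of_eq ?_)⟩
      rw [← Real.exp_nat_mul]; push_cast; ring_nf
    calc _ ≤ Real.exp (-a) * Real.exp (a + 2 * a ^ 2) := by gcongr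
      _ = _ := by rw [← Real.exp_add]; ring_nf

lemma ta_rot {d : ℕ} (b : OrthonormalBasis (Fin d) ℝ (EuclideanSpace ℝ (Fin d))) :
    (gaussianVec d).map (fun w i => inner ℝ (b i) (WithLp.toLp 2 w)) = gaussianVec d := by
  have h1 : (fun (w : Fin d → ℝ) i => inner ℝ (b i) (WithLp.toLp 2 w)) =
      (WithLp.ofLp) ∘ (b.repr) ∘ (WithLp.toLp 2) := by
    funext w i; simp [b.repr_apply_apply]
  rw [h1, ← Measure.map_map (by fun_prop) (by fun_prop),
    ← Measure.map_map (by fun_prop) (by fun_prop), ta_map_toLp, stdGaussian_map b.repr,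
    ← ta_map_toLp, Measure.map_map (by fun_prop) (by fun_prop)]
  exact Measure.map_id

lemma ta_diag_mgf {d : ℕ} (a : Fin d → ℝ) (ha : ∀ i, |a i| ≤ 1 / 8) :
    Integrable (fun w : Fin d → ℝ => Real.exp (∑ i, a i * (w i ^ 2 - 1))) (gaussianVec d) ∧
    ∫ w, Real.exp (∑ i, a i * (w i ^ 2 - 1)) ∂(gaussianVec d) ≤ Real.exp (2 * ∑ i, a i ^ 2) := by
  simp only [Real.exp_sum, Finset.mul_sum]
  constructor
  · exact Integrable.fintype_prod (f := fun i (z : ℝ) => Real.exp (a i * (z ^ 2 - 1)))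
      fun i => (ta_mgf (a i) (ha i)).1
  · rw [integral_fintype_prod_eq_prod (f := fun i (z : ℝ) => Real.exp (a i * (z ^ 2 - 1)))]
    exact Finset.prod_le_prod (fun i _ => integral_nonneg fun z => (Real.exp_pos _).le)
      fun i _ => (ta_mgf (a i) (ha i)).2

/-- spectral data -/
lemma ta_spec {d : ℕ} (M : Matrix (Fin d) (Fin d) ℝ) (hM : Mᵀ = M) :
    ∃ (b : OrthonormalBasis (Fin d) ℝ (EuclideanSpace ℝ (Fin d))) (μ : Fin d → ℝ),
      (∀ w : Fin d → ℝ, ∑ i, ∑ j, w i * M i j * w j =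
        ∑ i, μ i * (inner ℝ (b i) (WithLp.toLp 2 w)) ^ 2) ∧
      Matrix.trace M = ∑ i, μ i ∧ frobSq M = ∑ i, μ i ^ 2 := by
  have hH : M.IsHermitian := by
    rw [Matrix.IsHermitian, Matrix.conjTranspose_eq_transpose_of_trivial]; exact hM
  have hspec := hH.spectral_theorem
  have hU : (star (hH.eigenvectorUnitary : Matrix (Fin d) (Fin d) ℝ)) *
      (hH.eigenvectorUnitary : Matrix (Fin d) (Fin d) ℝ) = 1 := Unitary.coe_star_mul_self _
  rw [Unitary.conjStarAlgAut_apply] at hspec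
  set U : Matrix (Fin d) (Fin d) ℝ := (hH.eigenvectorUnitary : Matrix (Fin d) (Fin d) ℝ) with hUd
  set μ := hH.eigenvalues with hμ
  have hent : ∀ i j, M i j = ∑ k, U i k * μ k * U j k := by
    intro i j
    conv_lhs => rw [hspec]
    simp [Matrix.mul_apply, Matrix.diagonal_apply, Matrix.star_apply]
  have hUo : ∀ k l, ∑ i, U i k * U i l = if k = l then 1 else 0 := by
    intro k l
    have := congrFun (congrFun hU k) l
    simpa [Matrix.mul_apply, Matrix.star_apply, Matrix.one_apply] using this
  refine ⟨hH.eigenvectorBasis, μ, ?_, ?_, ?_⟩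
  · intro w
    have hin : ∀ k, inner ℝ (hH.eigenvectorBasis k) (WithLp.toLp 2 w) = ∑ i, w i * U i k := by
      intro k
      simp [PiLp.inner_apply, hUd, Matrix.IsHermitian.eigenvectorUnitary_apply]
    simp only [hin, hent, pow_two, Finset.mul_sum, Finset.sum_mul]
    rw [Finset.sum_comm]
    conv_rhs => rw [Finset.sum_comm]
    refine Finset.sum_congr rfl fun i _ => ?_
    conv_rhs => rw [Finset.sum_comm]
    refine Finset.sum_congr rfl fun j _ => Finset.sum_congr rfl fun k _ => ?_
    ring
  · simpa using hH.trace_eq_sum_eigenvalues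
  · have h1 : frobSq M = Matrix.trace (M * M) := by
      simp only [frobSq, Matrix.trace, Matrix.diag, Matrix.mul_apply]
      refine Finset.sum_congr rfl fun i _ => Finset.sum_congr rfl fun j _ => ?_
      have : M j i = M i j := by conv_lhs => rw [← hM, Matrix.transpose_apply]
      rw [this, pow_two]
    have h2 : M * M = U * (Matrix.diagonal (fun i => μ i ^ 2)) * star U := by
      conv_lhs => rw [hspec]
      calc _ = U * Matrix.diagonal (RCLike.ofReal ∘ μ) * (star U * U) *
            Matrix.diagonal (RCLike.ofReal ∘ μ) * star U := by simp only [Matrix.mul_assoc]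
        _ = _ := by
          rw [hU, Matrix.mul_one, Matrix.mul_assoc U, Matrix.diagonal_mul_diagonal]
          simp [pow_two]
    rw [h1, h2, Matrix.trace_mul_comm, ← Matrix.mul_assoc, hU, Matrix.one_mul,
      Matrix.trace_diagonal]

lemma ta_hw_one {d : ℕ} (b : OrthonormalBasis (Fin d) ℝ (EuclideanSpace ℝ (Fin d)))
    (μ : Fin d → ℝ) (F s : ℝ) (hF : 0 < F) (hs : 1 ≤ s) (hμ : ∑ i, μ i ^ 2 = F ^ 2) :
    (gaussianVec d).real {w | 16 * s * F ≤
      ∑ i, μ i * ((inner ℝ (b i) (WithLp.toLp 2 w)) ^ 2 - 1)} ≤ Real.exp (-s) := by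
  have hmp : MeasurePreserving (fun (w : Fin d → ℝ) i => inner ℝ (b i) (WithLp.toLp 2 w))
      (gaussianVec d) (gaussianVec d) := ⟨by fun_prop, ta_rot b⟩
  have h1 : (gaussianVec d).real {w | 16 * s * F ≤
      ∑ i, μ i * ((inner ℝ (b i) (WithLp.toLp 2 w)) ^ 2 - 1)} =
      (gaussianVec d).real {w | 16 * s * F ≤ ∑ i, μ i * ((w i) ^ 2 - 1)} := by
    have hms : MeasurableSet {w : Fin d → ℝ | 16 * s * F ≤ ∑ i, μ i * ((w i) ^ 2 - 1)} :=
      measurableSet_le (by fun_prop) (by fun_prop)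
    rw [← hmp.measureReal_preimage hms.nullMeasurableSet]
    rfl
  rw [h1]
  have hle : ∀ i, |μ i| ≤ F := fun i => by
    apply abs_le_of_sq_le_sq _ hF.le
    rw [← hμ]
    exact Finset.single_le_sum (f := fun i => μ i ^ 2) (fun j _ => sq_nonneg _) (Finset.mem_univ i)
  obtain ⟨hi, hm⟩ := ta_diag_mgf (fun i => (8 * F)⁻¹ * μ i) (fun i => by
    rw [abs_mul, abs_of_pos (by positivity), inv_mul_le_iff₀ (by positivity)]
    linarith [hle i])
  have hsum : ∀ w : Fin d → ℝ, ∑ i, (8 * F)⁻¹ * μ i * (w i ^ 2 - 1) =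
      (8 * F)⁻¹ * ∑ i, μ i * (w i ^ 2 - 1) := fun w => by
    rw [Finset.mul_sum]; exact Finset.sum_congr rfl fun i _ => by ring
  simp only [hsum] at hi hm
  have hsq : ∑ i, ((8 * F)⁻¹ * μ i) ^ 2 = 1 / 64 := by
    simp only [mul_pow]
    rw [← Finset.mul_sum, hμ]; field_simp; norm_num
  rw [hsq] at hm
  have := measure_ge_le_exp_mul_mgf (μ := gaussianVec d)
    (X := fun w => ∑ i, μ i * (w i ^ 2 - 1)) (t := (8 * F)⁻¹) (16 * s * F) (by positivity) hi
  refine this.trans ?_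
  rw [mgf]
  calc _ ≤ Real.exp (-(8 * F)⁻¹ * (16 * s * F)) * Real.exp (2 * (1 / 64)) := by gcongr
    _ = Real.exp (-2 * s + 1 / 32) := by
      rw [← Real.exp_add]; congr 1; field_simp; ring
    _ ≤ _ := Real.exp_le_exp.2 (by linarith)

lemma ta_hw {d : ℕ} (M : Matrix (Fin d) (Fin d) ℝ) (hM : Mᵀ = M) (s : ℝ) (hs : 1 ≤ s) :
    (gaussianVec d).real {w | 16 * s * Real.sqrt (frobSq M) <
      |∑ i, ∑ j, w i * M i j * w j - Matrix.trace M|} ≤ 2 * Real.exp (-s) := by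
  obtain ⟨b, μ, hq, htr, hfr⟩ := ta_spec M hM
  have hnn : 0 ≤ ∑ i, μ i ^ 2 := Finset.sum_nonneg fun i _ => sq_nonneg _
  have hq' : ∀ w : Fin d → ℝ, ∑ i, ∑ j, w i * M i j * w j - Matrix.trace M =
      ∑ i, μ i * ((inner ℝ (b i) (WithLp.toLp 2 w)) ^ 2 - 1) := fun w => by
    rw [hq, htr, ← Finset.sum_sub_distrib]
    exact Finset.sum_congr rfl fun i _ => by ring
  simp only [hq', hfr]
  rcases hnn.eq_or_lt with h0 | hpos
  · have hz : ∀ i, μ i = 0 := fun i => by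
      have := (Finset.sum_eq_zero_iff_of_nonneg (fun i _ => sq_nonneg (μ i))).1 h0.symm i
        (Finset.mem_univ i)
      exact pow_eq_zero_iff (two_ne_zero) |>.1 this
    simp [hz]
    positivity
  · set F := Real.sqrt (∑ i, μ i ^ 2) with hFd
    have hF : 0 < F := Real.sqrt_pos.2 hpos
    have hF2 : ∑ i, μ i ^ 2 = F ^ 2 := (Real.sq_sqrt hnn).symm
    have h1 := ta_hw_one b μ F s hF hs hF2
    have h2 := ta_hw_one b (fun i => -μ i) F s hF hs (by simpa using hF2)
    have hsub : {w : Fin d → ℝ | 16 * s * F <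
        |∑ i, μ i * ((inner ℝ (b i) (WithLp.toLp 2 w)) ^ 2 - 1)|} ⊆
        {w | 16 * s * F ≤ ∑ i, μ i * ((inner ℝ (b i) (WithLp.toLp 2 w)) ^ 2 - 1)} ∪
        {w | 16 * s * F ≤ ∑ i, -μ i * ((inner ℝ (b i) (WithLp.toLp 2 w)) ^ 2 - 1)} := by
      intro w hw
      simp only [Set.mem_ofPred_eq, Set.mem_union, neg_mul, Finset.sum_neg_distrib] at hw ⊢
      rcases lt_abs.1 hw with h | h
      · left; exact h.le
      · right; exact h.le
    calc _ ≤ _ := measureReal_mono hsub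
      _ ≤ _ := measureReal_union_le _ _
      _ ≤ _ := by linarith

lemma ta_compl {Ω : Type*} [MeasurableSpace Ω] (P : Measure Ω) [IsProbabilityMeasure P]
    (S T : Set Ω) (p : ℝ) (hp : P.real T ≤ p) (h : ∀ ω, ω ∉ S → ω ∈ T) :
    P S ≥ ENNReal.ofReal (1 - p) := by
  have h1 : 1 ≤ P.real S + P.real T := by
    have : (Set.univ : Set Ω) ⊆ S ∪ T := fun ω _ => by
      by_cases hω : ω ∈ S
      · exact Or.inl hω
      · exact Or.inr (h ω hω)
    calc (1 : ℝ) = P.real Set.univ := by simp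
      _ ≤ P.real (S ∪ T) := measureReal_mono this
      _ ≤ _ := measureReal_union_le _ _
  rw [ge_iff_le, ENNReal.ofReal_le_iff_le_toReal (measure_ne_top _ _)]
  change _ ≤ P.real S
  linarith

lemma ta_a {d dc : ℕ} (f : (Fin d → ℝ) → ℝ) (hf : Measurable f) (L t m e : ℝ)
    (hb : ∀ w, |f w| ≤ L) (ht : 0 < t) (he : 0 ≤ e)
    (hm : |∫ w, f w ∂(gaussianVec d) - m| ≤ 5 * L * e) :
    gaussianMat dc d {W | |(dc : ℝ)⁻¹ * ∑ k, f (W k) - m| ≤ 16 * L * (e + t)} ≥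
      ENNReal.ofReal (1 - 2 * Real.exp (-(1 / 2) * dc * t ^ 2)) := by
  have hL : 0 ≤ L := (abs_nonneg _).trans (hb 0)
  rcases Nat.eq_zero_or_pos dc with h0 | hdc
  · subst h0
    rw [ENNReal.ofReal_of_nonpos (by simp)]
    exact zero_le
  · refine ta_compl _ _ _ _ (ta_hoeff hdc f hf L t hb ht) fun W hW => ?_
    simp only [Set.mem_ofPred_eq, not_le] at hW ⊢
    have := abs_sub_le ((dc : ℝ)⁻¹ * ∑ k, f (W k)) (∫ w, f w ∂(gaussianVec d)) m
    nlinarith [mul_nonneg hL he, mul_nonneg hL ht.le]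

lemma ta_trace_le {d : ℕ} (M : Matrix (Fin d) (Fin d) ℝ) :
    |Matrix.trace M| ≤ Real.sqrt d * Real.sqrt (frobSq M) := by
  have h : (Matrix.trace M) ^ 2 ≤ d * frobSq M := by
    have h1 := sq_sum_le_card_mul_sum_sq (s := Finset.univ) (f := fun i : Fin d => M i i)
    simp only [Finset.card_univ, Fintype.card_fin] at h1
    refine h1.trans ?_
    gcongr
    exact Finset.sum_le_sum fun i _ =>
      Finset.single_le_sum (f := fun j => M i j ^ 2) (fun j _ => sq_nonneg _) (Finset.mem_univ i)
  rw [← Real.sqrt_mul (by positivity)]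
  exact Real.abs_le_sqrt h

lemma ta_b {d dc : ℕ} (f : (Fin d → ℝ) → ℝ) (hf : Measurable f) (L t m e : ℝ)
    (hb : ∀ w, |f w| ≤ L) (ht : 0 < t) (he : 0 ≤ e)
    (hm : |∫ w, f w ∂(gaussianVec d) - m| ≤ 5 * L * e)
    (M : Matrix (Fin d) (Fin d) ℝ) (hM : Mᵀ = M) :
    gaussianMat dc d {W | |(dc : ℝ)⁻¹ * ∑ k, f (W k) * (∑ i, ∑ j, W k i * M i j * W k j) -
        m * Matrix.trace M| ≤ 16 * L * (e * Real.sqrt d + t * Real.sqrt d + t * Real.sqrt dc) *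
          Real.sqrt (frobSq M)} ≥
      ENNReal.ofReal (1 - (2 * (dc : ℝ) + 2) *
        Real.exp (-(1 / 2) * min (t ^ 2 * dc) (t * Real.sqrt dc))) := by
  have hL : 0 ≤ L := (abs_nonneg _).trans (hb 0)
  rcases Nat.eq_zero_or_pos dc with h0 | hdc
  · subst h0
    rw [ENNReal.ofReal_of_nonpos (by simp)]
    exact zero_le
  have hdc' : (1 : ℝ) ≤ dc := by exact_mod_cast hdc
  set s := t * Real.sqrt dc with hs
  have hs0 : 0 < s := by positivity
  have hs2 : t ^ 2 * dc = s ^ 2 := by rw [hs, mul_pow, Real.sq_sqrt (by positivity)]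
  rw [hs2]
  by_cases hs1 : s < 1
  · rw [ENNReal.ofReal_of_nonpos]
    · exact zero_le
    · have h1 : min (s ^ 2) s ≤ 1 := (min_le_right _ _).trans hs1.le
      have h2 := Real.add_one_le_exp (-(1 / 2) * min (s ^ 2) s)
      nlinarith
  push Not at hs1
  have hmin : min (s ^ 2) s = s := min_eq_right (by nlinarith)
  rw [hmin]
  have hho := ta_hoeff hdc f hf L t hb ht
  set T0 := {W : Fin dc → Fin d → ℝ | L * t <
      |(dc : ℝ)⁻¹ * ∑ k, f (W k) - ∫ w, f w ∂(gaussianVec d)|} with hT0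
  set A := {w : Fin d → ℝ | 16 * s * Real.sqrt (frobSq M) <
      |∑ i, ∑ j, w i * M i j * w j - Matrix.trace M|} with hA
  have hAm : MeasurableSet A := measurableSet_lt (by fun_prop) (by fun_prop)
  have hT1 : (gaussianMat dc d).real (⋃ k, (fun W => W k) ⁻¹' A) ≤ dc * (2 * Real.exp (-s)) := by
    refine (measureReal_iUnion_fintype_le _).trans ?_
    calc _ ≤ ∑ k : Fin dc, 2 * Real.exp (-s) := by
          refine Finset.sum_le_sum fun k _ => ?_
          have := (measurePreserving_eval (fun _ : Fin dc => gaussianVec d) k)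
          have h3 := this.measureReal_preimage hAm.nullMeasurableSet
          exact h3.trans_le (ta_hw M hM s hs1)
      _ = _ := by simp
  refine ta_compl _ _ (T0 ∪ ⋃ k, (fun W => W k) ⁻¹' A) _ ?_ fun W hW => ?_
  · refine (measureReal_union_le _ _).trans ?_
    have e1 : Real.exp (-(1 / 2) * dc * t ^ 2) ≤ Real.exp (-(1 / 2) * s) := by
      rw [Real.exp_le_exp]; nlinarith
    have e2 : Real.exp (-s) ≤ Real.exp (-(1 / 2) * s) := by
      rw [Real.exp_le_exp]; nlinarith
    nlinarith
  · by_contra hcon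
    apply hW
    simp only [Set.mem_union, Set.mem_iUnion, Set.mem_preimage, not_or, not_exists, hT0, hA,
      Set.mem_ofPred_eq, not_lt] at hcon ⊢
    obtain ⟨c1, c2⟩ := hcon
    have htr := ta_trace_le M
    set F := Real.sqrt (frobSq M) with hF
    have hF0 : 0 ≤ F := Real.sqrt_nonneg _
    set R := Real.sqrt d with hR
    have hR0 : 0 ≤ R := Real.sqrt_nonneg _
    have k1 : (dc : ℝ)⁻¹ * ∑ k, f (W k) * (∑ i, ∑ j, W k i * M i j * W k j) - m * Matrix.trace M =
        (dc : ℝ)⁻¹ * ∑ k, f (W k) * (∑ i, ∑ j, W k i * M i j * W k j - Matrix.trace M) +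
        ((dc : ℝ)⁻¹ * ∑ k, f (W k) - m) * Matrix.trace M := by
      simp only [mul_sub, Finset.sum_sub_distrib, ← Finset.sum_mul]; ring
    have k2 : |(dc : ℝ)⁻¹ * ∑ k, f (W k) * (∑ i, ∑ j, W k i * M i j * W k j - Matrix.trace M)| ≤
        L * (16 * s * F) := by
      rw [abs_mul, abs_of_nonneg (by positivity), inv_mul_le_iff₀ (by linarith)]
      refine (Finset.abs_sum_le_sum_abs _ _).trans ?_
      calc _ ≤ ∑ k : Fin dc, L * (16 * s * F) := by
            refine Finset.sum_le_sum fun k _ => ?_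
            rw [abs_mul]
            exact mul_le_mul (hb _) (c2 k) (abs_nonneg _) hL
        _ = _ := by simp
    have k3 : |(dc : ℝ)⁻¹ * ∑ k, f (W k) - m| ≤ L * t + 5 * L * e :=
      (abs_sub_le _ (∫ w, f w ∂(gaussianVec d)) _).trans (add_le_add c1 hm)
    rw [k1]
    refine (abs_add_le _ _).trans ?_
    rw [abs_mul (_ - m)]
    calc _ ≤ L * (16 * s * F) + (L * t + 5 * L * e) * (R * F) := by gcongr
      _ ≤ _ := by
        have q1 : 0 ≤ L * t * (R * F) := by positivity
        have q2 : 0 ≤ L * e * (R * F) := by positivity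
        nlinarith

lemma ta_tr1 {dc : ℕ} (a b : Fin dc → ℝ) :
    Matrix.trace (Matrix.diagonal a * Matrix.diagonal b) = ∑ k, a k * b k := by
  rw [Matrix.diagonal_mul_diagonal, Matrix.trace_diagonal]

lemma ta_tr2 {d dc : ℕ} (a b : Fin dc → ℝ) (W : Fin dc → Fin d → ℝ)
    (M : Matrix (Fin d) (Fin d) ℝ) :
    Matrix.trace (Matrix.diagonal a * Matrix.of W * M * (Matrix.of W)ᵀ * Matrix.diagonal b) =
      ∑ k, (a k * b k) * (∑ i, ∑ j, W k i * M i j * W k j) := by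
  simp only [Matrix.trace, Matrix.diag]
  refine Finset.sum_congr rfl fun k _ => ?_
  rw [Matrix.mul_diagonal, Matrix.mul_assoc, Matrix.mul_assoc, Matrix.diagonal_mul,
    ← Matrix.mul_assoc]
  have : (Matrix.of W * M * (Matrix.of W)ᵀ) k k = ∑ i, ∑ j, W k i * M i j * W k j := by
    simp only [Matrix.mul_apply, Matrix.transpose_apply, Matrix.of_apply, Finset.sum_mul]
    exact Finset.sum_comm
  rw [this]; ring

theorem trace_approximations :
    ∃ C : ℝ, 0 < C ∧ ∃ c : ℝ, 0 < c ∧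
      ∀ (d n dc : ℕ) (X : Matrix (Fin d) (Fin n) ℝ) (ε B lamσ : ℝ)
        (σ σ' σ'' : ℝ → ℝ),
        (∀ x, HasDerivAt σ (σ' x) x) →
        (∀ x, HasDerivAt σ' (σ'' x) x) →
        (∀ x, |σ' x| ≤ lamσ) →
        (∀ x, |σ'' x| ≤ lamσ) →
        (∫ x, σ x ∂stdGaussian) = 0 →
        (∫ x, (σ x) ^ 2 ∂stdGaussian) = 1 →
        IsOrthonormal ε B X →
        ∀ α β : Fin n, α ≠ β → ∀ t : ℝ, 0 < t →
        -- (a) off-diagonal version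
        (gaussianMat dc d
            {W | |(dc : ℝ)⁻¹ *
                Matrix.trace (Matrix.diagonal (fun k : Fin dc => σ' (∑ i, W k i * X i α)) *
                  Matrix.diagonal (fun k : Fin dc => σ' (∑ i, W k i * X i β))) -
                (∫ x, σ' x ∂stdGaussian) ^ 2| ≤ C * lamσ ^ 2 * (ε + t)} ≥
          ENNReal.ofReal (1 - 2 * Real.exp (-c * dc * t ^ 2))) ∧
        -- (b) version with a deterministic symmetric matrix M
        (∀ M : Matrix (Fin d) (Fin d) ℝ, Mᵀ = M →
          gaussianMat dc d
              {W | |(dc : ℝ)⁻¹ *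
                  Matrix.trace (Matrix.diagonal (fun k : Fin dc => σ' (∑ i, W k i * X i α)) *
                    Matrix.of W * M * (Matrix.of W)ᵀ *
                    Matrix.diagonal (fun k : Fin dc => σ' (∑ i, W k i * X i β))) -
                  (∫ x, σ' x ∂stdGaussian) ^ 2 * Matrix.trace M| ≤
                C * lamσ ^ 2 * (ε * Real.sqrt d + t * Real.sqrt d + t * Real.sqrt dc) *
                  Real.sqrt (frobSq M)} ≥
            ENNReal.ofReal
              (1 - (2 * (dc : ℝ) + 2) *
                Real.exp (-c * min (t ^ 2 * dc) (t * Real.sqrt dc)))) ∧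
        -- (a) diagonal version, with `a_σ` in place of `b_σ²`
        (gaussianMat dc d
            {W | |(dc : ℝ)⁻¹ *
                Matrix.trace (Matrix.diagonal (fun k : Fin dc => σ' (∑ i, W k i * X i α)) *
                  Matrix.diagonal (fun k : Fin dc => σ' (∑ i, W k i * X i α))) -
                (∫ x, (σ' x) ^ 2 ∂stdGaussian)| ≤ C * lamσ ^ 2 * (ε + t)} ≥
          ENNReal.ofReal (1 - 2 * Real.exp (-c * dc * t ^ 2))) ∧
        -- (b) diagonal version, with `a_σ` in place of `b_σ²`
        (∀ M : Matrix (Fin d) (Fin d) ℝ, Mᵀ = M →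
          gaussianMat dc d
              {W | |(dc : ℝ)⁻¹ *
                  Matrix.trace (Matrix.diagonal (fun k : Fin dc => σ' (∑ i, W k i * X i α)) *
                    Matrix.of W * M * (Matrix.of W)ᵀ *
                    Matrix.diagonal (fun k : Fin dc => σ' (∑ i, W k i * X i α))) -
                  (∫ x, (σ' x) ^ 2 ∂stdGaussian) * Matrix.trace M| ≤
                C * lamσ ^ 2 * (ε * Real.sqrt d + t * Real.sqrt d + t * Real.sqrt dc) *
                  Real.sqrt (frobSq M)} ≥
            ENNReal.ofReal
              (1 - (2 * (dc : ℝ) + 2) *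
                Real.exp (-c * min (t ^ 2 * dc) (t * Real.sqrt dc)))) := by
  refine ⟨16, by norm_num, 1 / 2, by norm_num, ?_⟩
  intro d n dc X ε B L σ σ' σ'' h1 h2 hb hb2 _ _ hX α β hαβ t ht
  have hc : Continuous σ' := continuous_iff_continuousAt.2 fun x => (h2 x).continuousAt
  have hl : ∀ a b, |σ' a - σ' b| ≤ L * |a - b| := fun a b => by
    have := Convex.norm_image_sub_le_of_norm_hasDerivWithin_le (f := σ') (f' := σ'') (C := L)
      (s := Set.univ) (fun x _ => (h2 x).hasDerivWithinAt) (fun x _ => hb2 x) convex_univ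
      (Set.mem_univ b) (Set.mem_univ a)
    simpa using this
  have hL : 0 ≤ L := (abs_nonneg _).trans (hb 0)
  obtain ⟨hX1, hX2, -, -⟩ := hX
  have he : 0 ≤ ε := (abs_nonneg _).trans (hX1 α)
  have hoff := ta_bias_off (fun i => X i α) (fun i => X i β) σ' L ε hc hb hl (hX1 α) (hX1 β)
    (hX2 α β hαβ)
  have hdiag := ta_bias_diag (fun i => X i α) σ' L ε hc hb hl (hX1 α)
  have hbb : ∀ γ : Fin n, ∀ w : Fin d → ℝ,
      |σ' (∑ i, w i * X i α) * σ' (∑ i, w i * X i γ)| ≤ L ^ 2 := fun γ w => by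
    rw [abs_mul, pow_two]; exact mul_le_mul (hb _) (hb _) (abs_nonneg _) hL
  have hmeas : ∀ γ : Fin n, Measurable fun w : Fin d → ℝ =>
      σ' (∑ i, w i * X i α) * σ' (∑ i, w i * X i γ) := fun γ =>
    Continuous.measurable (by fun_prop)
  simp only [ta_tr1, ta_tr2]
  exact ⟨ta_a _ (hmeas β) (L ^ 2) t _ ε (hbb β) ht he hoff,
    fun M hM => ta_b _ (hmeas β) (L ^ 2) t _ ε (hbb β) ht he hoff M hM,
    ta_a _ (hmeas α) (L ^ 2) t _ ε (hbb α) ht he hdiag,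
    fun M hM => ta_b _ (hmeas α) (L ^ 2) t _ ε (hbb α) ht he hdiag M hM⟩
end
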